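/- Let ρ : Fin r → Equiv.Perm (Fin n) be a string C-group in the blocks-of-size-2 setup with m = n/2 ≥ 7 and r ≥ n/2, and suppose R ∪ C = {0}, i.e. L = Fin r \ {0}. Then r = n/2, the image of φ is all of Equiv.Perm (Fin m), and the block action of the generators is the path: there exists a bijection c : Fin m ≃ Fin m such that for every index j with 1 ≤ j ≤ r − 1, φ (ρ j) = Equiv.swap (c (j−1)) (c j). -/

import Mathlib

/-- A string group generated by involutions (sggi): each generator has order 2 and
nonconsecutive generators commute. -/
def IsSggi {n r : ℕ} (ρ : Fin r → Equiv.Perm (Fin n)) : Prop :=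
  (∀ i, orderOf (ρ i) = 2) ∧
  ∀ i j : Fin r, 1 < |((i : ℕ) : ℤ) - ((j : ℕ) : ℤ)| → (ρ i * ρ j) ^ 2 = 1

/-- A string C-group: an sggi satisfying the intersection property. -/
def IsStringC {n r : ℕ} (ρ : Fin r → Equiv.Perm (Fin n)) : Prop :=
  IsSggi ρ ∧ ∀ J K : Set (Fin r),
    Subgroup.closure (ρ '' J) ⊓ Subgroup.closure (ρ '' K) =
      Subgroup.closure (ρ '' (J ∩ K))

/-!
Deleting the generator with index `0` leaves an independent string `σ 0, …, σ (d - 1)` of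
involutions generating a transitive group on `Ω`, where `|Ω| ≤ d + 1`. The `σ j` with `j` even
commute, so they generate an elementary abelian 2-group `E`. Its order is the largest possible one,
`2 ^ ⌊|Ω| / 2⌋`, hence `E` is determined by its orbits, which have sizes 2 and 4 and at most once 1.

By independence, `σ i` with `i` odd does not normalize `E`, although it commutes with a subgroup `W`
of index at most four in `E`. So it must break an orbit of `E`, and counting in `W` leaves only a
few shapes for the `E`-orbits involved: sizes 2 and 2, sizes 2 and 4, or, for the last generator, a
fixed point and an orbit of size 2. A break of sizes 2 and 4 would propagate along the string and
force the same orbit of size 4 on the indices 1, 3 and 5, which independence rules out.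

In the break of sizes 2 and 2 at `x`, the permutation `swap x (σ i x) * σ i` lies in `W`. For a
neighbour `σ j` of `σ i`, the product `σ i * σ j` is a 3-cycle times involutions commuting with it,
and its cube shows that `swap x (σ i x) * σ i = swap a (σ j a) * σ j` for some `a`. By this equality
the permutation lies in the subgroup `W` of every odd index, so it is trivial, and `σ i` and `σ j`
are transpositions. Independent transpositions forming a transitive string form a path.
-/

open Equiv MulAction

section CommutingInvolutions

variable {G : Type*} [Group G]

theorem mul_comm_of_mul_self {E : Subgroup G} (hE : ∀ g ∈ E, g * g = 1) {g h : G} (hg : g ∈ E)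
    (hh : h ∈ E) : g * h = h * g := by
  rw [← inv_eq_of_mul_eq_one_right (hE _ (mul_mem hg hh)), mul_inv_rev,
    inv_eq_of_mul_eq_one_right (hE g hg), inv_eq_of_mul_eq_one_right (hE h hh)]

theorem mul_self_of_mem_closure {A : Set G} (hsq : ∀ a ∈ A, a * a = 1)
    (hcomm : ∀ a ∈ A, ∀ b ∈ A, a * b = b * a) {g : G} (hg : g ∈ Subgroup.closure A) :
    g * g = 1 := by
  have := Subgroup.isMulCommutative_closure hcomm
  induction hg using Subgroup.closure_induction with
  | mem a ha => exact hsq a ha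
  | one => exact one_mul 1
  | mul g h hg hh ihg ihh =>
    have hgh : g * h = h * g := congrArg Subtype.val
      (mul_comm' (⟨g, hg⟩ : Subgroup.closure A) ⟨h, hh⟩)
    rw [mul_assoc, ← mul_assoc h, ← hgh, mul_assoc g h h, ihh, mul_one, ihg]
  | inv g hg ih => rw [← mul_inv_rev, ih, inv_one]

theorem mul_comm_of_mem_closure {A : Set G} {t : G} (hcomm : ∀ a ∈ A, t * a = a * t) {g : G}
    (hg : g ∈ Subgroup.closure A) : t * g = g * t := by
  have hA : A ⊆ Subgroup.centralizer {t} := fun a ha =>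
    Subgroup.mem_centralizer_singleton_iff.2 (hcomm a ha).symm
  exact (Subgroup.mem_centralizer_singleton_iff.1 ((Subgroup.closure_le _).2 hA hg)).symm

theorem mem_closure_or_mul_mem_closure {A : Set G} {t : G} (ht : t * t = 1)
    (hcomm : ∀ a ∈ A, t * a = a * t) {g : G} (hg : g ∈ Subgroup.closure (insert t A)) :
    g ∈ Subgroup.closure A ∨ t * g ∈ Subgroup.closure A := by
  induction hg using Subgroup.closure_induction_left with
  | one => exact .inl (one_mem _)
  | mul_left a ha g _ ih =>
    obtain rfl | ha := ha
    · rw [← mul_assoc, ht, one_mul]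
      exact ih.symm
    · rw [← mul_assoc, hcomm a ha, mul_assoc]
      have := Subgroup.subset_closure ha
      exact ih.imp (mul_mem this) (mul_mem this)
  | inv_mul_cancel a ha g _ ih =>
    obtain rfl | ha := ha
    · rw [inv_eq_of_mul_eq_one_right ht, ← mul_assoc, ht, one_mul]
      exact ih.symm
    · have hta : t * a⁻¹ = a⁻¹ * t := (Commute.inv_right (hcomm a ha) : Commute t a⁻¹)
      rw [← mul_assoc, hta, mul_assoc]
      have := inv_mem (Subgroup.subset_closure ha)
      exact ih.imp (mul_mem this) (mul_mem this)

theorem card_closure_insert {A : Set G} {t : G} (ht : t * t = 1)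
    (hcomm : ∀ a ∈ A, t * a = a * t) (htA : t ∉ Subgroup.closure A) :
    Nat.card (Subgroup.closure (insert t A)) = 2 * Nat.card (Subgroup.closure A) := by
  have hle : Subgroup.closure A ≤ Subgroup.closure (insert t A) :=
    Subgroup.closure_mono (Set.subset_insert t A)
  have hindex : (Subgroup.closure A).relIndex (Subgroup.closure (insert t A)) = 2 := by
    have htg : ∀ g ∈ Subgroup.closure A, t * g ∉ Subgroup.closure A := fun g hg h =>
      htA ((Subgroup.mul_mem_cancel_right _ hg).1 h)
    refine Subgroup.relIndex_eq_two_iff.2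
      ⟨t, Subgroup.subset_closure (Set.mem_insert t A), fun g hg => ?_⟩
    have hgt : g * t = t * g := (mul_comm_of_mem_closure (A := insert t A)
      (Set.forall_mem_insert.2 ⟨rfl, hcomm⟩) hg).symm
    rw [hgt]
    rcases mem_closure_or_mul_mem_closure ht hcomm hg with hg | htg'
    · exact .inr ⟨hg, htg g hg⟩
    · exact .inl ⟨htg', fun hg => htg g hg htg'⟩
  have hmul := Subgroup.relIndex_mul_relIndex ⊥ _ _ bot_le hle
  rw [hindex, Subgroup.relIndex_bot_left, Subgroup.relIndex_bot_left] at hmul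
  omega

theorem card_closure_image {ι : Type*} [DecidableEq ι] {σ : ι → G} (J : Finset ι)
    (hsq : ∀ j ∈ J, σ j * σ j = 1) (hcomm : ∀ i ∈ J, ∀ j ∈ J, σ i * σ j = σ j * σ i)
    (hind : ∀ j ∈ J, σ j ∉ Subgroup.closure (σ '' (J.erase j))) :
    Nat.card (Subgroup.closure (σ '' J)) = 2 ^ J.card := by
  induction J using Finset.induction_on with
  | empty => simp
  | insert i J hi ih =>
    have hiJ : (insert i J).erase i = J := Finset.erase_insert hi
    rw [Finset.card_insert_of_notMem hi, pow_succ', Finset.coe_insert, Set.image_insert_eq,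
      card_closure_insert (hsq i (J.mem_insert_self i)) ?_ (hiJ ▸ hind i (J.mem_insert_self i)),
      ih (fun j hj => hsq j (Finset.mem_insert_of_mem hj))
        (fun j hj k hk => hcomm j (Finset.mem_insert_of_mem hj) k (Finset.mem_insert_of_mem hk))]
    · intro j hj hmem
      refine hind j (Finset.mem_insert_of_mem hj) (Subgroup.closure_mono ?_ hmem)
      gcongr
      exact Finset.subset_insert i J
    · rintro _ ⟨j, hj, rfl⟩
      exact hcomm i (J.mem_insert_self i) j (Finset.mem_insert_of_mem hj)

end CommutingInvolutions

section PermutationGroups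

variable {Ω : Type*}

/-- The pointwise stabilizer in `E` of a set `S` of points. -/
def fixer (E : Subgroup (Perm Ω)) (S : Set Ω) : Subgroup (Perm Ω) :=
  E ⊓ fixingSubgroup (Perm Ω) S

variable {E : Subgroup (Perm Ω)} {S T : Set Ω} {g : Perm Ω} {x y : Ω}

theorem mem_fixer : g ∈ fixer E S ↔ g ∈ E ∧ ∀ x ∈ S, g x = x := by
  simp only [fixer, Subgroup.mem_inf, mem_fixingSubgroup_iff, Perm.smul_def]

theorem fixer_le : fixer E S ≤ E :=
  inf_le_left

theorem fixer_univ : fixer E Set.univ = ⊥ :=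
  (Subgroup.eq_bot_iff_forall _).2 fun _ hg => Equiv.ext fun x => (mem_fixer.1 hg).2 x trivial

theorem fixer_fixer : fixer (fixer E S) T = fixer E (S ∪ T) := by
  ext g
  simp only [mem_fixer, Set.mem_union, or_imp, forall_and, and_assoc]

theorem mem_orbit_perm : y ∈ orbit E x ↔ ∃ g ∈ E, g x = y :=
  ⟨fun ⟨g, hg⟩ => ⟨g, g.2, hg⟩, fun ⟨g, hg, hgx⟩ => ⟨⟨g, hg⟩, hgx⟩⟩

theorem apply_mem_orbit (hg : g ∈ E) (x : Ω) : g x ∈ orbit E x :=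
  mem_orbit_perm.2 ⟨g, hg, rfl⟩

theorem mapsTo_orbit (hg : g ∈ E) (x : Ω) : Set.MapsTo g (orbit E x) (orbit E x) :=
  fun _ hy => mem_orbit_of_mem_orbit (⟨g, hg⟩ : E) hy

theorem orbit_subset (hS : ∀ g ∈ E, Set.MapsTo g S S) (hx : x ∈ S) : orbit E x ⊆ S := by
  rintro _ ⟨g, rfl⟩
  exact hS g g.2 hx

theorem mapsTo_of_mem_closure [Finite Ω] {A : Set (Perm Ω)} (hA : ∀ a ∈ A, Set.MapsTo a S S)
    (hg : g ∈ Subgroup.closure A) : Set.MapsTo g S S := by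
  induction hg using Subgroup.closure_induction with
  | mem a ha => exact hA a ha
  | one => exact Set.mapsTo_id S
  | mul g h _ _ ihg ihh => exact ihg.comp ihh
  | inv g _ ih => exact Perm.perm_symm_mapsTo_of_mapsTo g ih

theorem ncard_orbit_mul_card_fixer (E : Subgroup (Perm Ω)) (x : Ω) :
    (orbit E x).ncard * Nat.card (fixer E {x}) = Nat.card E := by
  have hmap : fixer E {x} = (stabilizer E x).map E.subtype := by
    ext g
    simp [mem_fixer, Subgroup.mem_map, mem_stabilizer_iff, Subgroup.smul_def, and_comm]
  rw [hmap, Subgroup.card_map_of_injective E.subtype_injective, ← index_stabilizer, mul_comm,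
    Subgroup.card_mul_index]

theorem fixer_orbit (hE : ∀ g ∈ E, g * g = 1) (x : Ω) : fixer E (orbit E x) = fixer E {x} := by
  ext g
  simp only [mem_fixer, Set.mem_singleton_iff, forall_eq]
  refine and_congr_right fun hg => ⟨fun h => h x (mem_orbit_self x), fun hx => ?_⟩
  rintro _ ⟨h, rfl⟩
  exact (Equiv.ext_iff.1 (mul_comm_of_mul_self hE hg h.2) x).trans (congrArg (h : Perm Ω) hx)

theorem exists_ncard_orbit_eq_two_pow [Finite Ω] (hE : ∀ g ∈ E, g * g = 1) (x : Ω) :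
    ∃ a, (orbit E x).ncard = 2 ^ a := by
  have : Fact (Nat.Prime 2) := ⟨Nat.prime_two⟩
  have hp : IsPGroup 2 E := fun g => ⟨1, Subtype.ext ((pow_two _).trans (hE g g.2))⟩
  exact hp.card_orbit x

theorem card_le_two_pow_mul_card_fixer [Finite Ω] (hE : ∀ g ∈ E, g * g = 1)
    (hS : ∀ g ∈ E, Set.MapsTo g S S) :
    Nat.card E ≤ 2 ^ (S.ncard / 2) * Nat.card (fixer E S) := by
  induction hk : S.ncard using Nat.strong_induction_on generalizing E S with
  | _ k ih =>
  subst hk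
  obtain rfl | ⟨x, hx⟩ := S.eq_empty_or_nonempty
  · simp [fixer]
  have hOS : orbit E x ⊆ S := orbit_subset hS hx
  obtain ⟨a, ha⟩ := exists_ncard_orbit_eq_two_pow hE x
  have hncard : (S \ orbit E x).ncard + 2 ^ a = S.ncard :=
    ha ▸ Set.ncard_sdiff_add_ncard_of_subset hOS
  have hpos : 0 < 2 ^ a := by positivity
  have hrest := ih (S \ orbit E x).ncard (by omega)
    (fun g hg => hE g (fixer_le hg) : ∀ g ∈ fixer E (orbit E x), g * g = 1)
    (S := S \ orbit E x) (fun g hg y hy => ⟨hS g (fixer_le hg) hy.1, fun h => hy.2 <| by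
      rwa [← g.injective ((mem_fixer.1 hg).2 _ h)]⟩) rfl
  rw [fixer_fixer, Set.union_sdiff_cancel hOS, fixer_orbit hE] at hrest
  have ha' : a ≤ 2 ^ a / 2 := by
    cases a with
    | zero => exact zero_le
    | succ a => simpa [pow_succ] using a.lt_two_pow_self
  calc Nat.card E = 2 ^ a * Nat.card (fixer E {x}) := by rw [← ha, ncard_orbit_mul_card_fixer]
    _ ≤ 2 ^ (2 ^ a / 2) * (2 ^ ((S \ orbit E x).ncard / 2) * Nat.card (fixer E S)) := by
      gcongr
      exact one_le_two
    _ ≤ 2 ^ (S.ncard / 2) * Nat.card (fixer E S) := by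
      rw [← mul_assoc, ← pow_add]
      gcongr
      · exact one_le_two
      · omega

theorem card_le_two_pow [Finite Ω] (hE : ∀ g ∈ E, g * g = 1) :
    Nat.card E ≤ 2 ^ (Nat.card Ω / 2) := by
  have hcard := card_le_two_pow_mul_card_fixer hE (S := Set.univ) fun _ _ => Set.mapsTo_univ _ _
  rwa [fixer_univ, Subgroup.card_bot, mul_one, Set.ncard_univ] at hcard

end PermutationGroups

section MaximalElementary

variable {Ω : Type*} {E : Subgroup (Perm Ω)} {S T : Set Ω} {g τ : Perm Ω} {x y : Ω}

/-- A subgroup of exponent two of the symmetric group on `Ω` of the largest possible order,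
namely `2 ^ ⌊|Ω| / 2⌋`. -/
structure IsMaxElementary (E : Subgroup (Perm Ω)) : Prop where
  mul_self : ∀ g ∈ E, g * g = 1
  card : Nat.card E = 2 ^ (Nat.card Ω / 2)

namespace IsMaxElementary

theorem mul_comm (hE : IsMaxElementary E) {h : Perm Ω} (hg : g ∈ E) (hh : h ∈ E) :
    g * h = h * g :=
  mul_comm_of_mul_self hE.mul_self hg hh

theorem apply_apply (hE : IsMaxElementary E) (hg : g ∈ E) (x : Ω) : g (g x) = x :=
  Equiv.ext_iff.1 (hE.mul_self g hg) x

theorem apply_comm (hE : IsMaxElementary E) {h : Perm Ω} (hg : g ∈ E) (hh : h ∈ E) (x : Ω) :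
    g (h x) = h (g x) :=
  Equiv.ext_iff.1 (hE.mul_comm hg hh) x

theorem apply_mem_iff (hE : IsMaxElementary E) (hS : ∀ g ∈ E, Set.MapsTo g S S) (hg : g ∈ E) :
    g x ∈ S ↔ x ∈ S :=
  ⟨fun h => hE.apply_apply hg x ▸ hS g hg h, fun h => hS g hg h⟩

theorem mapsTo_compl (hE : IsMaxElementary E) (hS : ∀ g ∈ E, Set.MapsTo g S S) :
    ∀ g ∈ E, Set.MapsTo g Sᶜ Sᶜ :=
  fun _ hg _ hx h => hx ((hE.apply_mem_iff hS hg).1 h)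

variable [Finite Ω]

theorem mem_of_forall_mul_comm (hE : IsMaxElementary E) (hg : g * g = 1)
    (hcomm : ∀ h ∈ E, g * h = h * g) : g ∈ E := by
  have helem : ∀ h ∈ Subgroup.closure (insert g (E : Set (Perm Ω))), h * h = 1 := fun h hh =>
    mul_self_of_mem_closure (Set.forall_mem_insert.2 ⟨hg, hE.mul_self⟩)
      (Set.forall_mem_insert.2 ⟨Set.forall_mem_insert.2 ⟨rfl, hcomm⟩, fun a ha =>
        Set.forall_mem_insert.2 ⟨(hcomm a ha).symm, fun b hb => hE.mul_comm ha hb⟩⟩) hh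
  have hle : E ≤ Subgroup.closure (insert g (E : Set (Perm Ω))) := fun h hh =>
    Subgroup.subset_closure (Set.mem_insert_of_mem g hh)
  rw [Subgroup.eq_of_le_of_card_ge hle (hE.card ▸ card_le_two_pow helem)]
  exact Subgroup.subset_closure (Set.mem_insert g E)

theorem exists_mem_eqOn (hE : IsMaxElementary E) (hS : ∀ g ∈ E, Set.MapsTo g S S) (hg : g ∈ E) :
    ∃ h ∈ E, (∀ x ∈ S, h x = g x) ∧ ∀ x ∉ S, h x = x := by
  classical
  let h : Perm Ω := Perm.ofSubtype (g.subtypePerm (p := (· ∈ S)) fun x => hE.apply_mem_iff hS hg)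
  have hmem : ∀ x ∈ S, h x = g x := fun x hx => Perm.ofSubtype_apply_of_mem _ hx
  have hnot : ∀ x ∉ S, h x = x := fun x hx => Perm.ofSubtype_apply_of_not_mem _ hx
  refine ⟨h, hE.mem_of_forall_mul_comm ?_ fun k hk => ?_, hmem, hnot⟩
  · ext x
    by_cases hx : x ∈ S
    · simp [hmem x hx, hmem _ (hS g hg hx), hE.apply_apply hg]
    · simp [hnot x hx]
  · ext x
    by_cases hx : x ∈ S
    · simp [hmem x hx, hmem _ (hS k hk hx), hE.apply_comm hg hk]
    · simp [hnot x hx, hnot _ (hE.mapsTo_compl hS k hk hx)]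

theorem fixer_inter_le (hE : IsMaxElementary E) (hS : ∀ g ∈ E, Set.MapsTo g S S) :
    fixer E (S ∩ T) ≤ fixer E S ⊔ fixer E T := by
  intro g hg
  obtain ⟨hgE, hgfix⟩ := mem_fixer.1 hg
  obtain ⟨h, hhE, hhg, hhfix⟩ := hE.exists_mem_eqOn (hE.mapsTo_compl hS) hgE
  have hhS : h ∈ fixer E S := mem_fixer.2 ⟨hhE, fun x hx => hhfix x (not_not.2 hx)⟩
  have hghT : g * h ∈ fixer E T := mem_fixer.2 ⟨mul_mem hgE hhE, fun x hx => by
    by_cases hxS : x ∈ S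
    · simp [hhfix x (not_not.2 hxS), hgfix x ⟨hxS, hx⟩]
    · simp [hhg x hxS, hE.apply_apply hgE]⟩
  rw [show g = h * (g * h) by
    rw [hE.mul_comm hgE hhE, ← mul_assoc, hE.mul_self h hhE, one_mul]]
  exact Subgroup.mul_mem_sup hhS hghT

theorem card_fixer_and_div_two_add (hE : IsMaxElementary E) (hS : ∀ g ∈ E, Set.MapsTo g S S) :
    Nat.card (fixer E S) = 2 ^ (Sᶜ.ncard / 2) ∧
      S.ncard / 2 + Sᶜ.ncard / 2 = Nat.card Ω / 2 := by
  have h1 := card_le_two_pow_mul_card_fixer hE.mul_self hS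
  have h2 : Nat.card (fixer E S) ≤ 2 ^ (Sᶜ.ncard / 2) := by
    have := card_le_two_pow_mul_card_fixer (E := fixer E S) (S := Sᶜ)
      (fun g hg => hE.mul_self g (fixer_le hg)) fun g hg => hE.mapsTo_compl hS g (fixer_le hg)
    rwa [fixer_fixer, Set.union_compl_self, fixer_univ, Subgroup.card_bot, mul_one] at this
  have hadd := Set.ncard_add_ncard_compl S
  have hle : S.ncard / 2 + Sᶜ.ncard / 2 ≤ Nat.card Ω / 2 := by omega
  have h3 : 2 ^ (Nat.card Ω / 2) ≤ 2 ^ (S.ncard / 2) * Nat.card (fixer E S) := hE.card ▸ h1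
  have h4 : 2 ^ (Nat.card Ω / 2) ≤ 2 ^ (S.ncard / 2 + Sᶜ.ncard / 2) :=
    h3.trans (by rw [pow_add]; gcongr)
  have heq := hle.antisymm ((Nat.pow_le_pow_iff_right one_lt_two).1 h4)
  refine ⟨h2.antisymm ?_, heq⟩
  rw [← heq, pow_add] at h3
  exact Nat.le_of_mul_le_mul_left h3 (by positivity)

theorem card_eq_mul_card_fixer (hE : IsMaxElementary E) (hS : ∀ g ∈ E, Set.MapsTo g S S) :
    Nat.card E = 2 ^ (S.ncard / 2) * Nat.card (fixer E S) := by
  obtain ⟨h1, h2⟩ := hE.card_fixer_and_div_two_add hS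
  rw [h1, hE.card, ← h2, pow_add]

theorem ncard_orbit (hE : IsMaxElementary E) (x : Ω) :
    (orbit E x).ncard = 1 ∨ (orbit E x).ncard = 2 ∨ (orbit E x).ncard = 4 := by
  have h := hE.card_eq_mul_card_fixer (S := orbit E x) fun _ hg => mapsTo_orbit hg x
  rw [fixer_orbit hE.mul_self, ← ncard_orbit_mul_card_fixer E x] at h
  have heq := Nat.eq_of_mul_eq_mul_right Nat.card_pos h
  obtain ⟨a, ha⟩ := exists_ncard_orbit_eq_two_pow hE.mul_self x
  rw [ha] at heq ⊢
  have ha' : a = 2 ^ a / 2 := Nat.pow_right_injective le_rfl heq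
  match a with
  | 0 => simp
  | 1 => simp
  | 2 => simp
  | a + 3 =>
    have := a.lt_two_pow_self
    rw [pow_add] at ha'
    omega

theorem odd_card_of_fixed (hE : IsMaxElementary E) (hx : ∀ g ∈ E, g x = x) :
    Odd (Nat.card Ω) := by
  obtain ⟨-, h⟩ := hE.card_fixer_and_div_two_add (S := {x}) fun g hg => by simp [hx g hg]
  have := Set.ncard_add_ncard_compl {x}
  rw [Set.ncard_singleton] at h this
  rw [Nat.odd_iff]
  omega

theorem eq_of_fixed (hE : IsMaxElementary E) (hx : ∀ g ∈ E, g x = x) (hy : ∀ g ∈ E, g y = y) :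
    x = y := by
  classical
  have hmem : swap x y ∈ E := hE.mem_of_forall_mul_comm (swap_mul_self x y) fun g hg => by
    rw [mul_swap_eq_swap_mul, hx g hg, hy g hg]
  simpa using (hx _ hmem).symm

theorem orbit_eq_of_ne (hE : IsMaxElementary E) (hg : g ∈ E) (hy : y ∈ orbit E x) (hyx : y ≠ x)
    (hgx : g x ≠ x) (hgxy : g x ≠ y) : orbit E x = {x, y, g x, g y} := by
  obtain ⟨h, hh, rfl⟩ := mem_orbit_perm.1 hy
  have hgy : g (h x) ≠ h x := fun heq => hgx <| h.injective <| by rw [← hE.apply_comm hg hh, heq]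
  have hgy' : g (h x) ≠ x := fun heq => hgxy ((congrArg g heq).symm.trans (hE.apply_apply hg _))
  have hgxy' : g x ≠ g (h x) := fun heq => hyx (g.injective heq).symm
  have hfour : ({x, h x, g x, g (h x)} : Set Ω).ncard = 4 := by
    simp [Set.ncard_insert_of_notMem, hyx.symm, hgx.symm, hgxy.symm, hgy.symm, hgy'.symm, hgxy']
  refine (Set.eq_of_subset_of_ncard_le ?_ ?_ (Set.toFinite _)).symm
  · simp [Set.insert_subset_iff, hy, apply_mem_orbit hg x, mapsTo_orbit hg x hy]
  · rcases hE.ncard_orbit x with h | h | h <;> omega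

theorem mem_of_apply_mem_orbit (hE : IsMaxElementary E) (hg : g * g = 1)
    (horb : ∀ x, g x ∈ orbit E x) (hfix : ∀ x, g x = x → ∀ y ∈ orbit E x, g y = y) : g ∈ E := by
  have hgg : ∀ x, g (g x) = x := Equiv.ext_iff.1 hg
  refine hE.mem_of_forall_mul_comm hg fun s hs => Equiv.ext fun x => ?_
  change g (s x) = s (g x)
  by_cases hgx : g x = x
  · rw [hgx, hfix x hgx _ (apply_mem_orbit hs x)]
  by_cases hsx : s x = x
  · obtain ⟨h, hh, hhx⟩ := mem_orbit_perm.1 (horb x)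
    rw [hsx, ← hhx, hE.apply_comm hs hh, hsx]
  by_cases hsg : s x = g x
  · rw [hsg, hgg, ← hsg, hE.apply_apply hs]
  have hgsx : g (s x) ∈ orbit E x := by
    rw [← orbit_eq_iff.2 (apply_mem_orbit hs x)]
    exact horb (s x)
  rw [hE.orbit_eq_of_ne hs (horb x) hgx hsx hsg] at hgsx
  rcases hgsx with h | h | h | h
  · exact absurd ((hgg _).symm.trans (congrArg g h)) hsg
  · exact absurd (g.injective h) hsx
  · exact absurd (hfix _ h x (mem_orbit_symm.1 (apply_mem_orbit hs x))) hgx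
  · exact h

theorem conj_mem_of_image_orbit (hE : IsMaxElementary E) (hτ : τ * τ = 1)
    (horb : ∀ x, τ '' orbit E x = orbit E (τ x)) (hg : g ∈ E) : τ * g * τ ∈ E := by
  have hττ : ∀ x, τ (τ x) = x := Equiv.ext_iff.1 hτ
  refine hE.mem_of_apply_mem_orbit ?_ (fun x => ?_) fun x hx y hy => ?_
  · rw [show τ * g * τ * (τ * g * τ) = τ * (g * (τ * τ) * g) * τ by group, hτ, mul_one,
      hE.mul_self g hg, mul_one, hτ]
  · have := Set.mem_image_of_mem τ (apply_mem_orbit hg (τ x))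
    rwa [horb, hττ] at this
  · have hgx : g (τ x) = τ x := by simpa [hττ] using congrArg τ hx
    have hy' := Set.mem_image_of_mem τ hy
    rw [horb] at hy'
    obtain ⟨h, hh, hhy⟩ := mem_orbit_perm.1 hy'
    change τ (g (τ y)) = y
    rw [← hhy, hE.apply_comm hg hh, hgx, hhy, hττ]

theorem exists_image_orbit_ne (hE : IsMaxElementary E) (hτ : τ * τ = 1)
    (hnorm : ¬∀ g ∈ E, τ * g * τ ∈ E) :
    ∃ x, τ x ∉ orbit E x ∧ τ '' orbit E x ≠ orbit E (τ x) := by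
  have hττ : ∀ x, τ (τ x) = x := Equiv.ext_iff.1 hτ
  by_contra! hgood
  refine hnorm fun g hg => hE.conj_mem_of_image_orbit hτ (fun x => ?_) hg
  by_cases hx : ∃ y ∈ orbit E x, τ y ∉ orbit E x
  · obtain ⟨y, hy, hτy⟩ := hx
    rw [← orbit_eq_iff.2 hy] at hτy ⊢
    rw [hgood y hτy, eq_comm, orbit_eq_iff, ← hgood y hτy]
    exact Set.mem_image_of_mem τ (mem_orbit_symm.1 hy)
  · push Not at hx
    rw [orbit_eq_iff.2 (hx x (mem_orbit_self x))]
    exact Set.Subset.antisymm (Set.image_subset_iff.2 hx) fun y hy => ⟨τ y, hx y hy, hττ y⟩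

end IsMaxElementary

end MaximalElementary

section Breaks

variable {Ω : Type*} {E W : Subgroup (Perm Ω)} {S : Set Ω} {τ : Perm Ω} {x y : Ω}

/-- The involution `τ` breaks the `E`-orbit of `x`: it moves `x` out of this orbit without mapping
the orbit onto another one. If no orbit is broken, then `τ` normalizes `E`. -/
def Breaks (E : Subgroup (Perm Ω)) (τ : Perm Ω) (x : Ω) : Prop :=
  τ x ∉ orbit E x ∧ τ '' orbit E x ≠ orbit E (τ x)

/-- The orbit of `x` under the group generated by `E` and `τ`. -/
def jointOrbit (E : Subgroup (Perm Ω)) (τ : Perm Ω) (x : Ω) : Set Ω :=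
  orbit (Subgroup.closure (insert τ (E : Set (Perm Ω)))) x

theorem Breaks.symm (h : Breaks E τ x) (hτ : τ * τ = 1) : Breaks E τ (τ x) := by
  have hττ : ∀ x, τ (τ x) = x := Equiv.ext_iff.1 hτ
  refine ⟨by rw [hττ]; exact fun hx => h.1 (mem_orbit_symm.1 hx), fun heq => h.2 ?_⟩
  rw [hττ] at heq
  rw [← heq, Set.image_image]
  simp [hττ]

theorem mem_jointOrbit_self : x ∈ jointOrbit E τ x :=
  mem_orbit_self x

theorem mapsTo_jointOrbit {g : Perm Ω} (hg : g ∈ E) :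
    Set.MapsTo g (jointOrbit E τ x) (jointOrbit E τ x) :=
  mapsTo_orbit (Subgroup.subset_closure (Set.mem_insert_of_mem τ hg)) x

theorem mapsTo_jointOrbit_self : Set.MapsTo τ (jointOrbit E τ x) (jointOrbit E τ x) :=
  mapsTo_orbit (Subgroup.subset_closure (Set.mem_insert τ _)) x

theorem orbit_union_orbit_subset_jointOrbit :
    orbit E x ∪ orbit E (τ x) ⊆ jointOrbit E τ x :=
  Set.union_subset (orbit_subset (fun _ => mapsTo_jointOrbit) mem_jointOrbit_self)
    (orbit_subset (fun _ => mapsTo_jointOrbit) (mapsTo_jointOrbit_self mem_jointOrbit_self))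

theorem mapsTo_orbit_union_orbit {g : Perm Ω} (hg : g ∈ E) :
    Set.MapsTo g (orbit E x ∪ orbit E y) (orbit E x ∪ orbit E y) :=
  (mapsTo_orbit hg x).union_union (mapsTo_orbit hg y)

theorem eq_of_mem_jointOrbit_of_fixed [Finite Ω] (hy : y ∈ jointOrbit E τ x)
    (hE : ∀ g ∈ E, g y = y) (hτ : τ y = y) : y = x := by
  have hx : x ∈ jointOrbit E τ y := mem_orbit_symm.1 hy
  obtain ⟨g, hg, rfl⟩ := mem_orbit_perm.1 hx
  refine (mapsTo_of_mem_closure (S := {y}) ?_ hg rfl).symm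
  rintro a (rfl | ha) _ rfl
  exacts [hτ, hE a ha]

theorem image_orbit_of_mul_comm (hτW : ∀ w ∈ W, τ * w = w * τ) (x : Ω) :
    τ '' orbit W x = orbit W (τ x) := by
  ext z
  simp only [Set.mem_image, mem_orbit_perm]
  constructor
  · rintro ⟨_, ⟨w, hw, rfl⟩, rfl⟩
    exact ⟨w, hw, (Equiv.ext_iff.1 (hτW w hw) x).symm⟩
  · rintro ⟨w, hw, rfl⟩
    exact ⟨w x, ⟨w, hw, rfl⟩, Equiv.ext_iff.1 (hτW w hw) x⟩

theorem ncard_orbit_apply_of_mul_comm (hτW : ∀ w ∈ W, τ * w = w * τ) (x : Ω) :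
    (orbit W (τ x)).ncard = (orbit W x).ncard := by
  rw [← image_orbit_of_mul_comm hτW, Set.ncard_image_of_injective _ τ.injective]

theorem orbit_mono (hWE : W ≤ E) (x : Ω) : orbit W x ⊆ orbit E x :=
  orbit_subset (fun _ hw => mapsTo_orbit (hWE hw) x) (mem_orbit_self x)

theorem Breaks.ncard_orbit_ne [Finite Ω] (h : Breaks E τ x) (hWE : W ≤ E)
    (hτW : ∀ w ∈ W, τ * w = w * τ) (hx : (orbit E x).ncard = (orbit W x).ncard) :
    (orbit E (τ x)).ncard ≠ (orbit W x).ncard := by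
  intro hτx
  have himage := image_orbit_of_mul_comm hτW x
  have hcard := ncard_orbit_apply_of_mul_comm hτW x
  refine h.2 ?_
  rw [← Set.eq_of_subset_of_ncard_le (orbit_mono hWE x) hx.le, himage,
    Set.eq_of_subset_of_ncard_le (orbit_mono hWE (τ x)) (hτx.trans hcard.symm).le]

theorem IsMaxElementary.fixer_jointOrbit (hE : IsMaxElementary E) (hWE : W ≤ E)
    (hτW : ∀ w ∈ W, τ * w = w * τ) : fixer W (jointOrbit E τ x) = fixer W {x} := by
  ext w
  simp only [mem_fixer, Set.mem_singleton_iff, forall_eq]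
  refine and_congr_right fun hw => ⟨fun h => h x mem_jointOrbit_self, fun hx z hz => ?_⟩
  obtain ⟨g, hg, rfl⟩ := mem_orbit_perm.1 hz
  have hwg : w * g = g * w := mul_comm_of_mem_closure (A := insert τ (E : Set (Perm Ω)))
    (Set.forall_mem_insert.2 ⟨(hτW w hw).symm, fun a ha => hE.mul_comm (hWE hw) ha⟩) hg
  exact (Equiv.ext_iff.1 hwg x).trans (congrArg g hx)

theorem orbit_eq_singleton_iff : orbit E x = {x} ↔ ∀ g ∈ E, g x = x := by
  refine ⟨fun h g hg => ?_, fun h => ?_⟩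
  · simpa [h] using apply_mem_orbit hg x
  · refine Set.Subset.antisymm (orbit_subset (S := {x}) ?_ rfl) (by simp)
    rintro g hg _ rfl
    exact h g hg

theorem fixed_of_ncard_orbit_eq_one (h : (orbit E x).ncard = 1) : ∀ g ∈ E, g x = x := by
  obtain ⟨y, hy⟩ := Set.ncard_eq_one.1 h
  have hx : x = y := by simpa [hy] using mem_orbit_self (M := E) x
  exact orbit_eq_singleton_iff.1 (hx ▸ hy)

theorem Breaks.ncard_orbit_ne_one (h : Breaks E τ x)
    (hfix : ∀ y, (∀ g ∈ E, g y = y) → τ y = y) :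
    (orbit E x).ncard ≠ 1 ∧ (orbit E (τ x)).ncard ≠ 1 := by
  refine ⟨fun hx => h.1 ?_, fun hx => h.1 ?_⟩
  · rw [hfix x (fixed_of_ncard_orbit_eq_one hx)]
    exact mem_orbit_self x
  · have := hfix (τ x) (fixed_of_ncard_orbit_eq_one hx)
    rw [τ.injective this]
    exact mem_orbit_self x

theorem exists_orbit_eq_pair (hx : (orbit E x).ncard = 2) : ∃ y ≠ x, orbit E x = {x, y} := by
  obtain ⟨a, b, hab, h⟩ := Set.ncard_eq_two.1 hx
  have hmem : x ∈ ({a, b} : Set Ω) := h ▸ mem_orbit_self x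
  obtain rfl | rfl := hmem
  · exact ⟨b, hab.symm, h⟩
  · exact ⟨a, hab, h.trans (Set.pair_comm _ _)⟩

theorem Breaks.apply_eq_of_ncard_eq_two (h : Breaks E τ x) (hτ : τ * τ = 1)
    (hU : jointOrbit E τ x = orbit E x ∪ orbit E (τ x)) (hx : (orbit E x).ncard = 2)
    (hτx : (orbit E (τ x)).ncard = 2) (hy : y ∈ orbit E x) (hyx : y ≠ x) : τ y = y := by
  have hττ : ∀ x, τ (τ x) = x := Equiv.ext_iff.1 hτ
  obtain ⟨a, -, ha⟩ := exists_orbit_eq_pair hx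
  obtain ⟨b, -, hb⟩ := exists_orbit_eq_pair hτx
  obtain rfl : y = a := by simpa [ha, hyx] using hy
  have hτy : τ y ∈ jointOrbit E τ x :=
    mapsTo_jointOrbit_self (orbit_union_orbit_subset_jointOrbit (.inl hy))
  rw [hU, ha, hb] at hτy
  rcases hτy with (hτy | hτy) | hτy | hτy
  · exact absurd ((by rw [← hτy, hττ] : τ x = y) ▸ hy) h.1
  · exact hτy
  · exact absurd (τ.injective hτy) hyx
  · rw [Set.mem_singleton_iff] at hτy
    exact absurd (by rw [ha, hb, Set.image_pair, hτy]) h.2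

variable [Finite Ω]

theorem Breaks.ncard_union (h : Breaks E τ x) :
    (orbit E x ∪ orbit E (τ x)).ncard = (orbit E x).ncard + (orbit E (τ x)).ncard := by
  refine Set.ncard_union_eq ?_ (Set.toFinite _) (Set.toFinite _)
  refine (orbit.eq_or_disjoint x (τ x)).resolve_left fun heq => h.1 ?_
  exact heq ▸ mem_orbit_self (τ x)

theorem Breaks.ncard_orbit_le (h : Breaks E τ x) (hWE : W ≤ E) (hτW : ∀ w ∈ W, τ * w = w * τ) :
    (orbit W x).ncard ≤ (orbit E x).ncard ∧ (orbit W x).ncard ≤ (orbit E (τ x)).ncard ∧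
      (orbit E x).ncard + (orbit E (τ x)).ncard ≤ (jointOrbit E τ x).ncard := by
  refine ⟨Set.ncard_le_ncard (orbit_mono hWE x) (Set.toFinite _), ?_, ?_⟩
  · rw [← ncard_orbit_apply_of_mul_comm hτW]
    exact Set.ncard_le_ncard (orbit_mono hWE (τ x)) (Set.toFinite _)
  · rw [← h.ncard_union]
    exact Set.ncard_le_ncard orbit_union_orbit_subset_jointOrbit (Set.toFinite _)

theorem IsMaxElementary.two_pow_mul_card_le (hE : IsMaxElementary E) (hWE : W ≤ E)
    (hτW : ∀ w ∈ W, τ * w = w * τ) {k : ℕ} (hk : Nat.card E ≤ k * Nat.card W) (x : Ω) :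
    2 ^ ((jointOrbit E τ x).ncard / 2) * Nat.card (fixer E (jointOrbit E τ x)) ≤
      k * (orbit W x).ncard * Nat.card (fixer W (jointOrbit E τ x)) := by
  rw [hE.fixer_jointOrbit hWE hτW, mul_assoc, ncard_orbit_mul_card_fixer,
    ← hE.card_eq_mul_card_fixer fun g hg => mapsTo_jointOrbit hg]
  exact hk

theorem IsMaxElementary.two_pow_le (hE : IsMaxElementary E) (hWE : W ≤ E)
    (hτW : ∀ w ∈ W, τ * w = w * τ) {k : ℕ} (hk : Nat.card E ≤ k * Nat.card W) (x : Ω) :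
    2 ^ ((jointOrbit E τ x).ncard / 2) ≤ k * (orbit W x).ncard := by
  refine Nat.le_of_mul_le_mul_right (le_trans ?_ (hE.two_pow_mul_card_le hWE hτW hk x))
    (Nat.card_pos (α := fixer W (jointOrbit E τ x)))
  gcongr
  exact Subgroup.card_le_of_le (inf_le_inf_right _ hWE)

theorem IsMaxElementary.fixer_jointOrbit_eq (hE : IsMaxElementary E) (hWE : W ≤ E)
    (hτW : ∀ w ∈ W, τ * w = w * τ) {k : ℕ} (hk : Nat.card E ≤ k * Nat.card W)
    (hz : 2 ^ ((jointOrbit E τ x).ncard / 2) = k * (orbit W x).ncard) :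
    fixer E (jointOrbit E τ x) = fixer W {x} := by
  have hle := hE.two_pow_mul_card_le hWE hτW hk x
  rw [← hz] at hle
  rw [← hE.fixer_jointOrbit hWE hτW]
  exact (Subgroup.eq_of_le_of_card_ge (inf_le_inf_right _ hWE)
    (Nat.le_of_mul_le_mul_left hle (by positivity))).symm

theorem IsMaxElementary.ncard_orbit_of_le (hE : IsMaxElementary E) (hWE : W ≤ E) (x : Ω) :
    (orbit W x).ncard = 1 ∨ (orbit W x).ncard = 2 ∨ (orbit W x).ncard = 4 := by
  obtain ⟨a, ha⟩ := exists_ncard_orbit_eq_two_pow (fun g hg => hE.mul_self g (hWE hg)) x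
  have hle : 2 ^ a ≤ 2 ^ 2 := by
    rw [← ha]
    have := Set.ncard_le_ncard (orbit_mono hWE x) (Set.toFinite _)
    rcases hE.ncard_orbit x with h | h | h <;> omega
  have : a ≤ 2 := (Nat.pow_le_pow_iff_right one_lt_two).1 hle
  interval_cases a <;> simp [ha]

theorem Breaks.jointOrbit_eq (h : Breaks E τ x)
    (hfix : ∀ y, (∀ g ∈ E, g y = y) → τ y = y)
    (hcard : (jointOrbit E τ x).ncard ≤ (orbit E x).ncard + (orbit E (τ x)).ncard + 1) :
    jointOrbit E τ x = orbit E x ∪ orbit E (τ x) := by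
  refine Set.Subset.antisymm (fun y hy => ?_) orbit_union_orbit_subset_jointOrbit
  by_contra hyU
  have hsub : orbit E y ∪ (orbit E x ∪ orbit E (τ x)) ⊆ jointOrbit E τ x :=
    Set.union_subset (orbit_subset (fun _ => mapsTo_jointOrbit) hy)
      orbit_union_orbit_subset_jointOrbit
  have hdisj : Disjoint (orbit E y) (orbit E x ∪ orbit E (τ x)) := by
    simp only [Set.disjoint_union_right]
    simp only [Set.mem_union, not_or] at hyU
    exact ⟨(orbit.eq_or_disjoint _ _).resolve_left fun heq => hyU.1 (heq ▸ mem_orbit_self y),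
      (orbit.eq_or_disjoint _ _).resolve_left fun heq => hyU.2 (heq ▸ mem_orbit_self y)⟩
  have hle := Set.ncard_le_ncard hsub (Set.toFinite _)
  rw [Set.ncard_union_eq hdisj (Set.toFinite _) (Set.toFinite _), h.ncard_union] at hle
  have hpos : 0 < (orbit E y).ncard := (Set.ncard_pos (Set.toFinite _)).2 (nonempty_orbit y)
  have hyE := fixed_of_ncard_orbit_eq_one (E := E) (x := y) (by omega)
  have hyx := eq_of_mem_jointOrbit_of_fixed hy hyE (hfix y hyE)
  exact hyU (.inl (hyx ▸ mem_orbit_self y))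

/-- The smallest joint orbit in which `τ` breaks an `E`-orbit while fixing the `E`-fixed points:
two `E`-orbits of size two, of which `τ` just interchanges a point of each. Here and below, `W` is
meant to be the subgroup of `E` generated by those generators which commute with `τ`. -/
structure IsTwoTwoBreak [DecidableEq Ω] (E W : Subgroup (Perm Ω)) (τ : Perm Ω) (x : Ω) : Prop where
  breaks : Breaks E τ x
  ncard_left : (orbit E x).ncard = 2
  ncard_right : (orbit E (τ x)).ncard = 2
  fixer_eq : fixer E (orbit E x ∪ orbit E (τ x)) = W
  swap_mul_mem : swap x (τ x) * τ ∈ W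

/-- A joint orbit consisting of `E`-orbits of sizes two and four, on which `W` acts
nontrivially. -/
structure IsTwoFourBreak (E W : Subgroup (Perm Ω)) (τ : Perm Ω) (x : Ω) : Prop where
  breaks : Breaks E τ x
  ncard_left : (orbit E x).ncard = 2
  ncard_right : (orbit E (τ x)).ncard = 4
  ncard_orbit_sub : (orbit W x).ncard = 2
  fixer_orbit_le : fixer E (orbit E x ∪ orbit E (τ x)) ≤ W

/-- A joint orbit `{x, τ x, y}` consisting of an `E`-fixed point `x` and the `E`-orbit
`{τ x, y}`. -/
structure IsOneTwoBreak [DecidableEq Ω] (E W : Subgroup (Perm Ω)) (τ : Perm Ω) (x y : Ω) :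
    Prop where
  fixed : ∀ g ∈ E, g x = x
  apply_ne : τ x ≠ x
  orbit_apply : orbit E (τ x) = {τ x, y}
  ne : y ≠ τ x
  apply_eq : τ y = y
  fixer_eq : fixer E {x, τ x, y} = W
  swap_mul_mem : swap x (τ x) * τ ∈ W

theorem IsMaxElementary.swap_mul_mem [DecidableEq Ω] (hE : IsMaxElementary E) (hτ : τ * τ = 1)
    (hτW : ∀ w ∈ W, τ * w = w * τ) (hS : ∀ g ∈ E, Set.MapsTo g S S) (hSW : fixer E S = W)
    (hx : x ∈ S) (hτx : τ x ∈ S) (hfix : ∀ y ∈ S, y ≠ x → y ≠ τ x → τ y = y) :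
    swap x (τ x) * τ ∈ W := by
  have hττ : ∀ x, τ (τ x) = x := Equiv.ext_iff.1 hτ
  have hτS : ∀ y ∉ S, τ y ∉ S := fun y hy hτy => hy <| by
    by_cases hyx : y = x
    · exact hyx ▸ hx
    by_cases hyx' : y = τ x
    · exact hyx' ▸ hτx
    · have := hfix (τ y) hτy (fun h => hyx' (by rw [← h, hττ])) (τ.injective.ne hyx)
      rwa [← τ.injective this]
  have hon : ∀ y ∈ S, (swap x (τ x) * τ) y = y := fun y hy => by
    rw [Perm.mul_apply]
    by_cases hyx : y = x
    · rw [hyx, swap_apply_right]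
    by_cases hyx' : y = τ x
    · rw [hyx', hττ, swap_apply_left]
    · rw [hfix y hy hyx hyx', swap_apply_of_ne_of_ne hyx hyx']
  have hoff : ∀ y ∉ S, (swap x (τ x) * τ) y = τ y := fun y hy =>
    swap_apply_of_ne_of_ne (fun h => hτS y hy (h ▸ hx)) fun h => hτS y hy (h ▸ hτx)
  rw [← hSW]
  have hsq : swap x (τ x) * τ * (swap x (τ x) * τ) = 1 := by
    rw [mul_assoc, ← mul_assoc τ, mul_swap_eq_swap_mul, hττ, mul_assoc, hτ, mul_one,
      swap_comm (τ x), swap_mul_self]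
  refine mem_fixer.2 ⟨hE.mem_of_forall_mul_comm hsq fun g hg => Equiv.ext fun y => ?_, hon⟩
  rw [Perm.mul_apply, Perm.mul_apply g]
  by_cases hy : y ∈ S
  · rw [hon y hy, hon _ (hS g hg hy)]
  · obtain ⟨h, hh, hhg, hhS⟩ := hE.exists_mem_eqOn (hE.mapsTo_compl hS) hg
    have hhW : h ∈ W := hSW ▸ mem_fixer.2 ⟨hh, fun z hz => hhS z (not_not.2 hz)⟩
    rw [hoff y hy, hoff _ (hE.mapsTo_compl hS g hg hy), ← hhg y hy, ← hhg _ (hτS y hy)]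
    exact Equiv.ext_iff.1 (hτW h hhW) y

theorem Breaks.ncard_cases (h : Breaks E τ x) (hE : IsMaxElementary E) (hWE : W ≤ E)
    (hτW : ∀ w ∈ W, τ * w = w * τ) (hk : Nat.card E ≤ 4 * Nat.card W)
    (hfix : ∀ y, (∀ g ∈ E, g y = y) → τ y = y) :
    ((orbit E x).ncard = 2 ∧ (orbit E (τ x)).ncard = 2 ∧ (orbit W x).ncard = 1 ∨
      ((orbit E x).ncard = 2 ∧ (orbit E (τ x)).ncard = 4 ∨
        (orbit E x).ncard = 4 ∧ (orbit E (τ x)).ncard = 2) ∧ (orbit W x).ncard = 2) ∧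
      jointOrbit E τ x = orbit E x ∪ orbit E (τ x) ∧
      fixer E (orbit E x ∪ orbit E (τ x)) = fixer W {x} := by
  have hle := hE.two_pow_le hWE hτW hk x
  have hexp : ∀ n, 2 ^ ((jointOrbit E τ x).ncard / 2) ≤ 2 ^ n → (jointOrbit E τ x).ncard / 2 ≤ n :=
    fun _ => (Nat.pow_le_pow_iff_right one_lt_two).1
  have h1 := h.ncard_orbit_ne_one hfix
  obtain ⟨hWx, hWτx, hsub⟩ := h.ncard_orbit_le hWE hτW
  have hne := h.ncard_orbit_ne hWE hτW
  have hEx := hE.ncard_orbit x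
  have hEτx := hE.ncard_orbit (τ x)
  have hfixer : (jointOrbit E τ x).ncard ≤ (orbit E x).ncard + (orbit E (τ x)).ncard + 1 →
      2 ^ ((orbit E x ∪ orbit E (τ x)).ncard / 2) = 4 * (orbit W x).ncard →
      jointOrbit E τ x = orbit E x ∪ orbit E (τ x) ∧
      fixer E (orbit E x ∪ orbit E (τ x)) = fixer W {x} := fun hz hpow => by
    have hU := h.jointOrbit_eq hfix hz
    rw [← hU] at hpow ⊢
    exact ⟨rfl, hE.fixer_jointOrbit_eq hWE hτW hk hpow⟩
  rw [h.ncard_union] at hfixer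
  rcases hE.ncard_orbit_of_le hWE x with hq | hq | hq <;> rw [hq] at hle hfixer
  · have hz := hexp 2 hle
    obtain ⟨hx2, hτx2⟩ : (orbit E x).ncard = 2 ∧ (orbit E (τ x)).ncard = 2 := by omega
    exact ⟨.inl ⟨hx2, hτx2, hq⟩, hfixer (by omega) (by simp [hx2, hτx2])⟩
  · have hz := hexp 3 hle
    have hsizes : (orbit E x).ncard = 2 ∧ (orbit E (τ x)).ncard = 4 ∨
        (orbit E x).ncard = 4 ∧ (orbit E (τ x)).ncard = 2 := by omega
    exact ⟨.inr ⟨hsizes, hq⟩, hfixer (by omega) (by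
      simp [show (orbit E x).ncard + (orbit E (τ x)).ncard = 6 by omega])⟩
  · omega

theorem IsMaxElementary.exists_break [DecidableEq Ω] (hE : IsMaxElementary E) (hWE : W ≤ E)
    (hτ : τ * τ = 1) (hτW : ∀ w ∈ W, τ * w = w * τ) (hk : Nat.card E ≤ 4 * Nat.card W)
    (hfix : ∀ y, (∀ g ∈ E, g y = y) → τ y = y) (hnorm : ¬∀ g ∈ E, τ * g * τ ∈ E) :
    (∃ x, IsTwoTwoBreak E W τ x) ∨ ∃ x, IsTwoFourBreak E W τ x := by
  have hττ : ∀ x, τ (τ x) = x := Equiv.ext_iff.1 hτ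
  obtain ⟨x, h⟩ := hE.exists_image_orbit_ne hτ hnorm
  replace h : Breaks E τ x := h
  obtain ⟨hsizes, hU, hF⟩ := h.ncard_cases hE hWE hτW hk hfix
  rcases hsizes with ⟨hx, hτx, hW⟩ | ⟨⟨hx, hτx⟩ | ⟨hx, hτx⟩, hW⟩
  · have hFW : fixer E (orbit E x ∪ orbit E (τ x)) = W := by
      rw [hF]
      refine le_antisymm fixer_le fun w hw => mem_fixer.2 ⟨hw, ?_⟩
      rintro _ rfl
      exact fixed_of_ncard_orbit_eq_one hW w hw
    refine .inl ⟨x, h, hx, hτx, hFW, hE.swap_mul_mem hτ hτW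
      (fun g hg => mapsTo_orbit_union_orbit hg) hFW (.inl (mem_orbit_self x))
      (.inr (mem_orbit_self _)) fun y hy hyx hyτx => ?_⟩
    rcases hy with hy | hy
    · exact h.apply_eq_of_ncard_eq_two hτ hU hx hτx hy hyx
    · refine (h.symm hτ).apply_eq_of_ncard_eq_two hτ ?_ hτx (by rwa [hττ]) hy hyτx
      rw [hττ, Set.union_comm, ← hU]
      exact orbit_eq_iff.2 (mapsTo_jointOrbit_self mem_jointOrbit_self)
  · exact .inr ⟨x, h, hx, hτx, hW, hF ▸ fixer_le⟩
  · refine .inr ⟨τ x, h.symm hτ, hτx, by rwa [hττ], ?_, ?_⟩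
    · rwa [ncard_orbit_apply_of_mul_comm hτW]
    · rw [hττ, Set.union_comm, hF]
      exact fixer_le

theorem Breaks.ncard_cases_of_card_le_two_mul (h : Breaks E τ x) (hE : IsMaxElementary E)
    (hWE : W ≤ E) (hτW : ∀ w ∈ W, τ * w = w * τ) (hk : Nat.card E ≤ 2 * Nat.card W) :
    ((orbit E x).ncard = 1 ∧ (orbit E (τ x)).ncard = 2 ∨
      (orbit E x).ncard = 2 ∧ (orbit E (τ x)).ncard = 1) ∧
      (jointOrbit E τ x).ncard = 3 ∧ (orbit W x).ncard = 1 := by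
  have hle := hE.two_pow_le hWE hτW hk x
  have hexp : ∀ n, 2 ^ ((jointOrbit E τ x).ncard / 2) ≤ 2 ^ n → (jointOrbit E τ x).ncard / 2 ≤ n :=
    fun _ => (Nat.pow_le_pow_iff_right one_lt_two).1
  obtain ⟨hWx, hWτx, hsub⟩ := h.ncard_orbit_le hWE hτW
  have hne := h.ncard_orbit_ne hWE hτW
  have hEx := hE.ncard_orbit x
  have hEτx := hE.ncard_orbit (τ x)
  rcases hE.ncard_orbit_of_le hWE x with hq | hq | hq <;> rw [hq] at hle
  · have := hexp 1 hle
    omega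
  · have := hexp 2 hle
    omega
  · omega

theorem Breaks.exists_isOneTwoBreak [DecidableEq Ω] (h : Breaks E τ x) (hE : IsMaxElementary E)
    (hWE : W ≤ E) (hτ : τ * τ = 1) (hτW : ∀ w ∈ W, τ * w = w * τ)
    (hk : Nat.card E ≤ 2 * Nat.card W) (hx : (orbit E x).ncard = 1) :
    ∃ y, IsOneTwoBreak E W τ x y := by
  have hττ : ∀ x, τ (τ x) = x := Equiv.ext_iff.1 hτ
  obtain ⟨hsizes, hz, hq⟩ := h.ncard_cases_of_card_le_two_mul hE hWE hτW hk
  have hxE := fixed_of_ncard_orbit_eq_one hx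
  have hx1 : orbit E x = {x} := orbit_eq_singleton_iff.2 hxE
  obtain ⟨y, hy, hτx⟩ := exists_orbit_eq_pair (E := E) (x := τ x) (by omega)
  have hZ : jointOrbit E τ x = {x, τ x, y} := by
    have hU : orbit E x ∪ orbit E (τ x) = {x, τ x, y} := by rw [hx1, hτx, Set.singleton_union]
    rw [← hU]
    refine (Set.eq_of_subset_of_ncard_le orbit_union_orbit_subset_jointOrbit ?_
      (Set.toFinite _)).symm
    rw [h.ncard_union]
    omega
  have hFW : fixer E {x, τ x, y} = W := by
    rw [← hZ, hE.fixer_jointOrbit_eq hWE hτW hk (by simp [hz, hq])]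
    refine le_antisymm fixer_le fun w hw => mem_fixer.2 ⟨hw, ?_⟩
    rintro _ rfl
    exact hxE w (hWE hw)
  have hyx : y ≠ x := fun hyx => (h.symm hτ).1 (by rw [hττ, hτx, hyx]; simp)
  have hτy : τ y = y := by
    have hmem : τ y ∈ jointOrbit E τ x := mapsTo_jointOrbit_self (by simp [hZ])
    rw [hZ] at hmem
    rcases hmem with hmem | hmem | hmem
    · exact absurd (by rw [← hmem, hττ]) hy
    · exact absurd (τ.injective hmem) hyx
    · exact hmem
  refine ⟨y, hxE, fun hτx => h.1 (hτx.symm ▸ mem_orbit_self x), hτx, hy, hτy, hFW,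
    hE.swap_mul_mem hτ hτW (fun g hg => ?_) hFW (by simp) (by simp) ?_⟩
  · exact hZ ▸ mapsTo_jointOrbit hg
  · rintro z (rfl | rfl | rfl) hzx hzτx
    exacts [absurd rfl hzx, absurd rfl hzτx, hτy]

theorem IsMaxElementary.exists_isOneTwoBreak [DecidableEq Ω] (hE : IsMaxElementary E)
    (hWE : W ≤ E) (hτ : τ * τ = 1) (hτW : ∀ w ∈ W, τ * w = w * τ)
    (hk : Nat.card E ≤ 2 * Nat.card W) (hnorm : ¬∀ g ∈ E, τ * g * τ ∈ E) :
    ∃ x y, IsOneTwoBreak E W τ x y := by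
  obtain ⟨x, h⟩ := hE.exists_image_orbit_ne hτ hnorm
  replace h : Breaks E τ x := h
  obtain ⟨⟨hx, -⟩ | ⟨-, hτx⟩, -⟩ := h.ncard_cases_of_card_le_two_mul hE hWE hτW hk
  · exact ⟨x, h.exists_isOneTwoBreak hE hWE hτ hτW hk hx⟩
  · exact ⟨τ x, (h.symm hτ).exists_isOneTwoBreak hE hWE hτ hτW hk hτx⟩

end Breaks

section IndependentStrings

variable {G : Type*} [Group G] {σ : ℕ → G} {J J' S : Finset ℕ} {c d i j l : ℕ} {g : G}

/-- The subgroup generated by the members of the family `σ` with index in `J`. -/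
def gen (σ : ℕ → G) (J : Finset ℕ) : Subgroup G :=
  Subgroup.closure (σ '' J)

/-- The first `d` members of `σ` are independent involutions, nonconsecutive ones commuting. -/
structure IsIndepString (d : ℕ) (σ : ℕ → G) : Prop where
  mul_self : ∀ i < d, σ i * σ i = 1
  mul_comm : ∀ i j, i + 2 ≤ j → j < d → σ i * σ j = σ j * σ i
  notMem_gen : ∀ i < d, σ i ∉ gen σ ((Finset.range d).erase i)

/-- A set of indices containing no two consecutive ones. -/
def Nonadjacent (J : Finset ℕ) : Prop :=
  ∀ i ∈ J, i + 1 ∉ J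

/-- The members of `J` not adjacent to `i`. -/
def awayFrom (J : Finset ℕ) (i : ℕ) : Finset ℕ :=
  {j ∈ J | j ≠ i + 1 ∧ j + 1 ≠ i}

theorem mem_gen (hj : j ∈ J) : σ j ∈ gen σ J :=
  Subgroup.subset_closure (Set.mem_image_of_mem σ hj)

theorem gen_le {H : Subgroup G} : gen σ J ≤ H ↔ ∀ j ∈ J, σ j ∈ H := by
  simp [gen, Subgroup.closure_le, Set.subset_def]

theorem gen_mono (h : J ⊆ J') : gen σ J ≤ gen σ J' :=
  gen_le.2 fun _ hj => mem_gen (h hj)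

theorem gen_union : gen σ (J ∪ J') = gen σ J ⊔ gen σ J' := by
  rw [gen, Finset.coe_union, Set.image_union, Subgroup.closure_union, gen, gen]

theorem awayFrom_subset : awayFrom J i ⊆ J :=
  Finset.filter_subset _ _

theorem mem_sdiff_awayFrom : j ∈ J \ awayFrom J i ↔ j ∈ J ∧ (j = i + 1 ∨ j + 1 = i) := by
  simp only [awayFrom, Finset.mem_sdiff, Finset.mem_filter]
  tauto

theorem gen_awayFrom_le_gen : gen σ (awayFrom J i) ≤ gen σ J :=
  gen_mono awayFrom_subset

theorem mul_comm_of_mem_gen {t : G} (h : ∀ j ∈ J, t * σ j = σ j * t) (hg : g ∈ gen σ J) :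
    t * g = g * t :=
  mul_comm_of_mem_closure (Set.forall_mem_image.2 h) hg

namespace IsIndepString

variable (h : IsIndepString d σ)
include h

theorem mul_comm_of_ne (hi : i < d) (hj : j < d) (hij : j ≠ i + 1) (hji : j + 1 ≠ i) :
    σ i * σ j = σ j * σ i := by
  rcases lt_trichotomy i j with hlt | rfl | hlt
  · exact h.mul_comm i j (by omega) hj
  · rfl
  · exact (h.mul_comm j i (by omega) hi).symm

theorem of_le {e : ℕ} (hed : e ≤ d) : IsIndepString e σ where
  mul_self i hi := h.mul_self i (hi.trans_le hed)
  mul_comm i j hij hj := h.mul_comm i j hij (hj.trans_le hed)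
  notMem_gen i hi hmem := h.notMem_gen i (hi.trans_le hed)
    (gen_mono (Finset.erase_subset_erase i (Finset.range_mono hed)) hmem)

theorem notMem_gen_of_notMem (hJ : J ⊆ Finset.range d) (hi : i < d) (hiJ : i ∉ J) :
    σ i ∉ gen σ J := fun hmem =>
  h.notMem_gen i hi (gen_mono (Finset.subset_erase.2 ⟨hJ, hiJ⟩) hmem)

theorem mul_comm_of_mem_awayFrom (hJ : J ⊆ Finset.range d) (hi : i < d) :
    ∀ g ∈ gen σ (awayFrom J i), σ i * g = g * σ i := fun g hg => by
  refine mul_comm_of_mem_gen (fun j hj => ?_) hg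
  obtain ⟨hjJ, hj1, hj2⟩ := Finset.mem_filter.1 hj
  exact h.mul_comm_of_ne hi (Finset.mem_range.1 (hJ hjJ)) hj1 hj2

variable (hJ : J ⊆ Finset.range d) (hadj : Nonadjacent J)
include hJ hadj

theorem mul_comm_of_nonadjacent (hi : i ∈ J) (hj : j ∈ J) : σ i * σ j = σ j * σ i :=
  h.mul_comm_of_ne (Finset.mem_range.1 (hJ hi)) (Finset.mem_range.1 (hJ hj))
    (fun hij => hadj i hi (hij ▸ hj)) fun hij => hadj j hj (hij ▸ hi)

theorem mul_self_of_mem_gen (hg : g ∈ gen σ J) : g * g = 1 :=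
  mul_self_of_mem_closure
    (Set.forall_mem_image.2 fun j hj => h.mul_self j (Finset.mem_range.1 (hJ hj)))
    (Set.forall_mem_image.2 fun _ hi => Set.forall_mem_image.2 fun _ hj =>
      h.mul_comm_of_nonadjacent hJ hadj hi hj) hg

theorem mem_gen_sdiff (hg : g ∈ gen σ J) (hS : ∀ c ∈ S, g ∈ gen σ ((Finset.range d).erase c)) :
    g ∈ gen σ (J \ S) := by
  induction S using Finset.induction_on with
  | empty => rwa [Finset.sdiff_empty]
  | insert c S _ ih =>
    rw [Finset.forall_mem_insert] at hS
    have hgS := ih hS.2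
    rw [Finset.sdiff_insert]
    by_cases hc : c ∈ J \ S
    swap
    · rwa [Finset.erase_eq_of_notMem hc]
    have hcJ := (Finset.mem_sdiff.1 hc).1
    have hcd := Finset.mem_range.1 (hJ hcJ)
    have hsub : (J \ S).erase c ⊆ (Finset.range d).erase c :=
      Finset.erase_subset_erase c (Finset.sdiff_subset.trans hJ)
    rw [← Finset.insert_erase hc, gen, Finset.coe_insert, Set.image_insert_eq] at hgS
    refine (mem_closure_or_mul_mem_closure (h.mul_self c hcd) ?_ hgS).resolve_right fun hmul => ?_
    · exact Set.forall_mem_image.2 fun j hj => h.mul_comm_of_nonadjacent hJ hadj hcJ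
        (Finset.sdiff_subset (Finset.erase_subset _ _ hj))
    · refine h.notMem_gen c hcd ?_
      simpa using mul_mem (gen_mono hsub hmul) (inv_mem hS.1)

theorem eq_one_of_forall_mem (hg : g ∈ gen σ J)
    (hK : ∀ c ∈ J, g ∈ gen σ ((Finset.range d).erase c)) : g = 1 := by
  simpa [gen] using h.mem_gen_sdiff hJ hadj hg hK

theorem card_gen : Nat.card (gen σ J) = 2 ^ J.card := by
  refine card_closure_image J (fun j hj => h.mul_self j (Finset.mem_range.1 (hJ hj)))
    (fun i hi j hj => h.mul_comm_of_nonadjacent hJ hadj hi hj) fun j hj => ?_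
  exact h.notMem_gen_of_notMem ((Finset.erase_subset _ _).trans hJ) (Finset.mem_range.1 (hJ hj))
    (Finset.notMem_erase j J)

theorem card_gen_le_of_sdiff_subset {T : Finset ℕ} (hT : J \ J' ⊆ T) (hJ' : J' ⊆ J) :
    Nat.card (gen σ J) ≤ 2 ^ T.card * Nat.card (gen σ J') := by
  rw [h.card_gen hJ hadj, h.card_gen (hJ'.trans hJ) fun i hi hi' => hadj i (hJ' hi) (hJ' hi'),
    ← pow_add]
  refine Nat.pow_le_pow_right two_pos ?_
  have := Finset.card_le_card hT
  have := Finset.card_sdiff_add_card_eq_card hJ'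
  omega

theorem card_gen_le_four_mul (i : ℕ) :
    Nat.card (gen σ J) ≤ 4 * Nat.card (gen σ (awayFrom J i)) := by
  refine (h.card_gen_le_of_sdiff_subset hJ hadj (T := {i + 1, i - 1}) (fun j hj => ?_)
    awayFrom_subset).trans (Nat.mul_le_mul_right _ (Nat.pow_le_pow_right two_pos
      Finset.card_le_two))
  have := (mem_sdiff_awayFrom.1 hj).2
  simp only [Finset.mem_insert, Finset.mem_singleton]
  omega

theorem card_gen_le_two_mul (hi : i + 1 ∉ J ∨ i = 0) :
    Nat.card (gen σ J) ≤ 2 * Nat.card (gen σ (awayFrom J i)) := by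
  refine h.card_gen_le_of_sdiff_subset hJ hadj (T := {if i = 0 then 1 else i - 1})
    (fun j hj => ?_) awayFrom_subset
  have := mem_sdiff_awayFrom.1 hj
  rw [Finset.mem_singleton]
  rcases hi with hi | rfl
  · have : j ≠ i + 1 := fun hji => hi (hji ▸ this.1)
    split <;> omega
  · rw [if_pos rfl]
    omega

theorem eq_one_of_mem_closure_pair (hj : j = i + 1 ∨ j + 1 = i) (hi : i < d) (hiJ : i ∉ J)
    (hg : g ∈ gen σ (awayFrom J i)) (hg' : g ∈ Subgroup.closure {σ i, σ j}) (hjd : j < d) :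
    g = 1 := by
  refine h.eq_one_of_forall_mem hJ hadj (gen_awayFrom_le_gen hg) fun c hc => ?_
  by_cases hci : c ≠ i + 1 ∧ c + 1 ≠ i
  · refine (Subgroup.closure_le _).2 ?_ hg'
    rintro _ (rfl | rfl)
    · exact mem_gen (by simp [hi, show i ≠ c from fun hic => hiJ (hic ▸ hc)])
    · exact mem_gen (by simp [hjd]; omega)
  · refine gen_mono (Finset.subset_erase.2 ⟨awayFrom_subset.trans hJ, fun hmem => hci ?_⟩) hg
    exact (Finset.mem_filter.1 hmem).2

theorem mul_comm_of_conj_mem (hi : i < d) (hiJ : i ∉ J) (hj : j ∈ J)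
    (hmem : σ i * σ j * σ i ∈ gen σ J) : σ i * σ j = σ j * σ i := by
  have hii := h.mul_self i hi
  have hjj := h.mul_self j (Finset.mem_range.1 (hJ hj))
  have hmemj : σ i * σ j * σ i ∈ gen σ (J \ J.erase j) := by
    refine h.mem_gen_sdiff hJ hadj hmem fun c hc => ?_
    obtain ⟨hcj, hcJ⟩ := Finset.mem_erase.1 hc
    have hi' : i ∈ (Finset.range d).erase c :=
      Finset.mem_erase.2 ⟨fun hic => hiJ (hic ▸ hcJ), Finset.mem_range.2 hi⟩
    have hj' : j ∈ (Finset.range d).erase c := Finset.mem_erase.2 ⟨hcj.symm, hJ hj⟩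
    exact mul_mem (mul_mem (mem_gen hi') (mem_gen hj')) (mem_gen hi')
  rw [Finset.sdiff_erase_self hj, gen, Finset.coe_singleton, Set.image_singleton,
    ← LawfulSingleton.insert_empty_eq] at hmemj
  suffices σ i * σ j * σ i = σ j by
    rw [← mul_inv_eq_iff_eq_mul, inv_eq_of_mul_eq_one_right hii, this]
  have hone := mem_closure_or_mul_mem_closure hjj (by simp) hmemj
  rw [Subgroup.closure_empty, Subgroup.mem_bot, Subgroup.mem_bot] at hone
  refine hone.elim (fun hone => ?_) fun hone => ?_
  · have hj1 : σ j = 1 := by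
      rw [mul_eq_one_iff_eq_inv, inv_eq_of_mul_eq_one_right hii] at hone
      exact mul_eq_left.1 hone
    exact absurd (hj1 ▸ one_mem (gen σ _)) (h.notMem_gen j (Finset.mem_range.1 (hJ hj)))
  · rw [← inv_eq_of_mul_eq_one_right hone, inv_eq_of_mul_eq_one_right hjj]

end IsIndepString

namespace IsIndepString

variable {Ω : Type*} {σ : ℕ → Perm Ω} (h : IsIndepString d σ)
  (hJ : J ⊆ Finset.range d) (hadj : Nonadjacent J)
include h hJ hadj

theorem isMaxElementary_gen (hcard : J.card = Nat.card Ω / 2) : IsMaxElementary (gen σ J) where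
  mul_self g hg := h.mul_self_of_mem_gen hJ hadj hg
  card := by rw [h.card_gen hJ hadj, hcard]

theorem not_normalizes [Finite Ω] (hE : IsMaxElementary (gen σ J)) (hi : i < d) (hiJ : i ∉ J) :
    ¬∀ g ∈ gen σ J, σ i * g * σ i ∈ gen σ J := fun hnorm => by
  refine h.notMem_gen_of_notMem hJ hi hiJ (hE.mem_of_forall_mul_comm (h.mul_self i hi) fun g hg =>
    mul_comm_of_mem_gen (fun j hj => ?_) hg)
  exact h.mul_comm_of_conj_mem hJ hadj hi hiJ hj (hnorm _ (mem_gen hj))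

end IsIndepString

end IndependentStrings

section Residues

variable {Ω : Type*} {E W : Subgroup (Perm Ω)} {τ s : Perm Ω} {a b c x y z : Ω}

theorem IsMaxElementary.apply_eq_of_mem_orbit (hE : IsMaxElementary E) (hs : s ∈ E)
    (hz : z ∈ orbit E x) (hsx : s x = x) : s z = z := by
  obtain ⟨g, hg, rfl⟩ := mem_orbit_perm.1 hz
  rw [hE.apply_comm hs hg, hsx]

variable [DecidableEq Ω]

theorem swap_mul_swap_pow_three (hab : a ≠ b) (hac : a ≠ c) (hcb : c ≠ b) :
    (swap a b * swap b c) ^ 3 = 1 := by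
  have hbc : swap b c * swap a b * swap b c = swap c a := swap_mul_swap_mul_swap hab hac
  have hba : swap a b * swap b c * swap a b = swap c a := by
    rw [swap_comm a b, swap_comm b c, swap_comm c a]
    exact swap_mul_swap_mul_swap hcb hac.symm
  calc (swap a b * swap b c) ^ 3
      = swap a b * swap b c * swap a b * (swap b c * swap a b * swap b c) := by
        simp only [pow_succ, pow_zero, one_mul, mul_assoc]
    _ = 1 := by rw [hbc, hba, swap_mul_self]

theorem eq_swap_of_swap_mul_eq_one (h : swap a b * s = 1) : s = swap a b := by
  rw [eq_inv_of_mul_eq_one_right h, swap_inv]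

theorem commute_swap_of_fixed (ha : s a = a) (hb : s b = b) : Commute s (swap a b) := by
  rw [commute_iff_eq, mul_swap_eq_swap_mul, ha, hb]

theorem swap_mul_eq_swap_mul (hW : ∀ g ∈ W, g * g = 1)
    (hfix : ∀ g ∈ W, g a = a ∧ g b = b ∧ g c = c) (hab : a ≠ b) (hac : a ≠ c) (hcb : c ≠ b)
    (hτ : swap a b * τ ∈ W) (hs : swap b c * s ∈ W)
    (hcube : ∀ g ∈ W, g ∈ Subgroup.closure {τ, s} → g = 1) :
    swap a b * τ = swap b c * s := by
  set w := swap a b * τ with hw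
  set v := swap b c * s with hv
  have hτw : τ = swap a b * w := by rw [hw, ← mul_assoc, swap_mul_self, one_mul]
  have hsv : s = swap b c * v := by rw [hv, ← mul_assoc, swap_mul_self, one_mul]
  have hwv : w * v ∈ W := mul_mem hτ hs
  have habW : ∀ g ∈ W, Commute g (swap a b) := fun g hg =>
    commute_swap_of_fixed (hfix g hg).1 (hfix g hg).2.1
  have hbcW : ∀ g ∈ W, Commute g (swap b c) := fun g hg =>
    commute_swap_of_fixed (hfix g hg).2.1 (hfix g hg).2.2
  -- On `{a, b, c}` the product `τ * s` is a 3-cycle, so it disappears in the cube.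
  have hpow : (τ * s) ^ 3 = w * v := by
    have hmul : τ * s = swap a b * swap b c * (w * v) := by
      rw [hτw, hsv, (hbcW w hτ).mul_mul_mul_comm]
    rw [hmul, ((habW _ hwv).mul_right (hbcW _ hwv)).symm.mul_pow,
      swap_mul_swap_pow_three hab hac hcb, one_mul, pow_succ, pow_two, hW _ hwv, one_mul]
  have hone : w * v = 1 := hcube _ hwv <| hpow ▸ pow_mem (mul_mem
    (Subgroup.subset_closure (by simp)) (Subgroup.subset_closure (by simp))) 3
  rw [← inv_eq_of_mul_eq_one_right hone, inv_eq_of_mul_eq_one_right (hW w hτ)]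

theorem swap_apply_mul_apply_of_fixed (hz : s z = z) : (swap x (s x) * s) z = z := by
  by_cases hx : s x = x
  · simp [hx, hz]
  · rw [Perm.mul_apply, hz, swap_apply_of_ne_of_ne]
    · rintro rfl
      exact hx hz
    · rintro rfl
      exact hx (s.injective hz)

namespace IsTwoTwoBreak

theorem symm (h : IsTwoTwoBreak E W τ x) (hτ : τ * τ = 1) : IsTwoTwoBreak E W τ (τ x) := by
  have hττ : τ (τ x) = x := Equiv.ext_iff.1 hτ x
  refine ⟨h.breaks.symm hτ, h.ncard_right, hττ.symm ▸ h.ncard_left, ?_, ?_⟩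
  · rw [hττ, Set.union_comm, h.fixer_eq]
  · rw [hττ, swap_comm]
    exact h.swap_mul_mem

theorem le (h : IsTwoTwoBreak E W τ x) : W ≤ E :=
  h.fixer_eq ▸ fixer_le

theorem swap_mul_eq [Finite Ω] (h : IsTwoTwoBreak E W τ x) (hE : IsMaxElementary E)
    (hs : s ∈ E) (hsx : s x ≠ x) (hsτx : s (τ x) = τ x)
    (hcube : ∀ g ∈ W, g ∈ Subgroup.closure {τ, s} → g = 1) :
    swap x (τ x) * τ = swap x (s x) * s := by
  have hxZ : x ∈ orbit E x ∪ orbit E (τ x) := .inl (mem_orbit_self x)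
  have hsxZ : s x ∈ orbit E x ∪ orbit E (τ x) := .inl (apply_mem_orbit hs x)
  obtain ⟨y, -, hy⟩ := exists_orbit_eq_pair h.ncard_left
  have hxy : s x = y := by simpa [hy, hsx] using apply_mem_orbit hs x
  have hsW : swap x (s x) * s ∈ W := by
    refine hE.swap_mul_mem (hE.mul_self s hs) (fun w hw => hE.mul_comm hs (h.le hw))
      (fun g hg => mapsTo_orbit_union_orbit hg) h.fixer_eq hxZ hsxZ fun z hz hzx hzsx => ?_
    rcases hz with hz | hz
    · rw [hy, ← hxy] at hz
      exact absurd hz (by simp [hzx, hzsx])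
    · exact hE.apply_eq_of_mem_orbit hs hz hsτx
  rw [swap_comm]
  have hfix : ∀ g ∈ W, ∀ z ∈ orbit E x ∪ orbit E (τ x), g z = z := fun g hg =>
    (mem_fixer.1 (h.fixer_eq.symm ▸ hg)).2
  refine swap_mul_eq_swap_mul (fun g hg => hE.mul_self g (h.le hg)) (fun g hg =>
    ⟨hfix g hg _ (.inr (mem_orbit_self _)), hfix g hg _ hxZ, hfix g hg _ hsxZ⟩) ?_ ?_ hsx
    (swap_comm x (τ x) ▸ h.swap_mul_mem) hsW hcube
  · exact fun hτx => h.breaks.1 (hτx.symm ▸ mem_orbit_self x)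
  · exact fun hτx => h.breaks.1 (hτx.symm ▸ apply_mem_orbit hs x)

theorem exists_swap_mul_eq [Finite Ω] (h : IsTwoTwoBreak E W τ x) (hE : IsMaxElementary E)
    (hτ : τ * τ = 1) (hs : s ∈ E) (hsW : s ∉ W) (hz : z ∈ orbit E x ∪ orbit E (τ x))
    (hsz : s z = z) (hcube : ∀ g ∈ W, g ∈ Subgroup.closure {τ, s} → g = 1) :
    ∃ a, s a ≠ a ∧ swap x (τ x) * τ = swap a (s a) * s := by
  have hττ : τ (τ x) = x := Equiv.ext_iff.1 hτ x
  have hmoves : ¬(s x = x ∧ s (τ x) = τ x) := fun hfix => hsW <| by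
    rw [← h.fixer_eq]
    refine mem_fixer.2 ⟨hs, ?_⟩
    rintro y (hy | hy)
    exacts [hE.apply_eq_of_mem_orbit hs hy hfix.1, hE.apply_eq_of_mem_orbit hs hy hfix.2]
  rcases hz with hz | hz
  · have hsx := hE.apply_eq_of_mem_orbit hs (mem_orbit_symm.1 hz) hsz
    have hsτx : s (τ x) ≠ τ x := fun hsτx => hmoves ⟨hsx, hsτx⟩
    refine ⟨τ x, hsτx, ?_⟩
    rw [← (h.symm hτ).swap_mul_eq hE hs hsτx (by rw [hττ, hsx]) hcube, hττ, swap_comm]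
  · have hsτx := hE.apply_eq_of_mem_orbit hs (mem_orbit_symm.1 hz) hsz
    have hsx : s x ≠ x := fun hsx => hmoves ⟨hsx, hsτx⟩
    exact ⟨x, hsx, h.swap_mul_eq hE hs hsx hsτx hcube⟩

end IsTwoTwoBreak

end Residues

section TwoFourBreaks

variable {Ω : Type*} {E W W' H : Subgroup (Perm Ω)} {S : Set Ω} {τ τ' : Perm Ω}
  {x x' : Ω}

theorem IsTwoFourBreak.apply (h : IsTwoFourBreak E W τ x) (hWE : W ≤ E)
    (hτW : ∀ w ∈ W, τ * w = w * τ) {w : Perm Ω} (hw : w ∈ W) : IsTwoFourBreak E W τ (w x) := by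
  have hx : orbit E (w x) = orbit E x := orbit_eq_iff.2 (apply_mem_orbit (hWE hw) x)
  have hWx : orbit W (w x) = orbit W x := orbit_eq_iff.2 (apply_mem_orbit hw x)
  have hτx : orbit E (τ (w x)) = orbit E (τ x) := by
    rw [show τ (w x) = w (τ x) from Equiv.ext_iff.1 (hτW w hw) x]
    exact orbit_eq_iff.2 (apply_mem_orbit (hWE hw) (τ x))
  refine ⟨⟨fun hmem => h.breaks.1 ?_, ?_⟩, hx ▸ h.ncard_left, hτx ▸ h.ncard_right,
    hWx ▸ h.ncard_orbit_sub, by rw [hx, hτx]; exact h.fixer_orbit_le⟩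
  · rwa [← orbit_eq_iff, hτx, hx, orbit_eq_iff] at hmem
  · rw [hx, hτx]
    exact h.breaks.2

variable [Finite Ω]

theorem IsTwoFourBreak.orbit_apply_subset (h : IsTwoFourBreak E W τ x) (hE : IsMaxElementary E)
    (hS : ∀ g ∈ E, Set.MapsTo g S S) (hSW : fixer E S ≤ W') (hWH : W ≤ H) (hWH' : W' ≤ H)
    (hH : H < E) : orbit E (τ x) ⊆ S := by
  refine orbit_subset hS ?_
  by_contra hτx
  have hinter : (orbit E x ∪ orbit E (τ x)) ∩ S ⊆ orbit E x := by
    rintro z ⟨hz | hz, hzS⟩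
    · exact hz
    · obtain ⟨g, hg, rfl⟩ := mem_orbit_perm.1 hz
      exact absurd ((hE.apply_mem_iff hS hg).1 hzS) hτx
  have hle : fixer E {x} ≤ H := by
    rw [← fixer_orbit hE.mul_self]
    calc fixer E (orbit E x) ≤ fixer E ((orbit E x ∪ orbit E (τ x)) ∩ S) := fun g hg =>
          mem_fixer.2 ⟨(mem_fixer.1 hg).1, fun z hz => (mem_fixer.1 hg).2 z (hinter hz)⟩
      _ ≤ fixer E (orbit E x ∪ orbit E (τ x)) ⊔ fixer E S :=
          hE.fixer_inter_le fun g hg => mapsTo_orbit_union_orbit hg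
      _ ≤ H := sup_le (h.fixer_orbit_le.trans hWH) (hSW.trans hWH')
  have hcard := ncard_orbit_mul_card_fixer E x
  rw [h.ncard_left] at hcard
  have hHx : fixer E {x} = H := by
    refine Subgroup.eq_of_le_of_card_ge hle ?_
    obtain ⟨k, hk⟩ := Subgroup.card_dvd_of_le hH.le
    have hk2 : 2 ≤ k := by
      by_contra! hk2
      refine hH.not_ge (Subgroup.eq_of_le_of_card_ge hH.le ?_).ge
      rw [hk]
      exact (Nat.mul_le_mul_left _ (by omega : k ≤ 1)).trans (Nat.mul_one _).le
    nlinarith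
  have hWx : orbit W x = {x} := orbit_eq_singleton_iff.2 fun g hg =>
    (mem_fixer.1 (hHx.symm ▸ hWH hg : g ∈ fixer E {x})).2 x rfl
  have := h.ncard_orbit_sub
  rw [hWx, Set.ncard_singleton] at this
  omega

theorem IsMaxElementary.apply_mem_orbit_of_notMem (hE : IsMaxElementary E)
    (hS : ∀ g ∈ E, Set.MapsTo g S S) (hSW : fixer E S ≤ W) (hτW : ∀ w ∈ W, τ * w = w * τ)
    (hx : x ∉ S) (hfix : ¬∀ g ∈ E, g x = x) : τ x ∈ orbit E x := by
  by_contra hτx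
  push Not at hfix
  obtain ⟨g, hg, hgx⟩ := hfix
  obtain ⟨k, hk, hkg, hkx⟩ := hE.exists_mem_eqOn (fun g hg => mapsTo_orbit hg x) hg
  have hkW : k ∈ W := hSW <| mem_fixer.2 ⟨hk, fun z hz => hkx z fun hzx => hx ?_⟩
  · have := Equiv.ext_iff.1 (hτW k hkW) x
    rw [Perm.mul_apply, Perm.mul_apply, hkx _ hτx, hkg x (mem_orbit_self x)] at this
    exact hgx (τ.injective this)
  · obtain ⟨g, hg, rfl⟩ := mem_orbit_perm.1 hzx
    exact (hE.apply_mem_iff hS hg).1 hz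

theorem IsTwoFourBreak.orbit_ne (h : IsTwoFourBreak E W τ x) (h' : IsTwoFourBreak E W' τ' x')
    (hE : IsMaxElementary E) (hO : orbit E (τ x) = orbit E (τ' x'))
    (hcard : 8 * Nat.card (W ⊓ W' : Subgroup (Perm Ω)) < Nat.card E) :
    orbit E x ≠ orbit E x' := by
  intro heq
  -- Both `W` and `W'` contain the fixer of the common orbits, which has index `2 ^ 3` in `E`.
  have hZ := hE.card_eq_mul_card_fixer (S := orbit E x ∪ orbit E (τ x)) fun g hg =>
    mapsTo_orbit_union_orbit hg
  rw [h.breaks.ncard_union, h.ncard_left, h.ncard_right] at hZ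
  refine hcard.not_ge (hZ.le.trans (Nat.mul_le_mul_left _ ?_))
  refine Subgroup.card_le_of_le (le_inf h.fixer_orbit_le ?_)
  rw [heq, hO]
  exact h'.fixer_orbit_le

theorem IsTwoFourBreak.apply_ne (h : IsTwoFourBreak E W τ x) (h' : IsTwoFourBreak E W' τ' x')
    (hE : IsMaxElementary E) (hWE' : W' ≤ E) (hτ : τ * τ = 1)
    (hτW : ∀ w ∈ W, τ * w = w * τ) (hτW' : ∀ w ∈ W', τ' * w = w * τ')
    (hττ' : τ * τ' = τ' * τ)
    (hcard : 8 * Nat.card (W ⊓ W' : Subgroup (Perm Ω)) < Nat.card E) : τ x ≠ τ' x' := by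
  intro heq
  have hO : orbit E (τ x) = orbit E (τ' x') := congrArg _ heq
  have hWx' : orbit W' x' = orbit E x' := by
    refine Set.eq_of_subset_of_ncard_le (orbit_mono hWE' _) ?_ (Set.toFinite _)
    rw [h'.ncard_left, h'.ncard_orbit_sub]
  have hτx' : τ x' ∈ orbit W' x' := by
    rw [hWx']
    refine hE.apply_mem_orbit_of_notMem (fun g hg => mapsTo_orbit_union_orbit hg)
      h.fixer_orbit_le hτW ?_ fun hfix => ?_
    · rintro (hx | hx) <;> rw [← orbit_eq_iff] at hx
      · exact h.orbit_ne h' hE hO hcard hx.symm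
      · exact h'.breaks.1 (hx.trans hO ▸ mem_orbit_self (τ' x'))
    · have := h'.ncard_left
      rw [orbit_eq_singleton_iff.2 hfix, Set.ncard_singleton] at this
      omega
  obtain ⟨w, hw, hwx'⟩ := mem_orbit_perm.1 hτx'
  refine h.breaks.1 (mem_orbit_symm.1 (mem_orbit_perm.2 ⟨w, hWE' hw, ?_⟩))
  calc w (τ x) = w (τ' x') := congrArg w heq
    _ = τ' (w x') := (Equiv.ext_iff.1 (hτW' w hw) x').symm
    _ = τ' (τ x') := congrArg τ' hwx'
    _ = τ (τ' x') := (Equiv.ext_iff.1 hττ' x').symm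
    _ = τ (τ x) := congrArg τ heq.symm
    _ = x := Equiv.ext_iff.1 hτ x

theorem IsTwoFourBreak.orbit_apply_ne (h : IsTwoFourBreak E W τ x)
    (h' : IsTwoFourBreak E W' τ' x') (hE : IsMaxElementary E) (hWE : W ⊔ W' = E)
    (hτ : τ * τ = 1) (hτW : ∀ w ∈ W, τ * w = w * τ) (hτW' : ∀ w ∈ W', τ' * w = w * τ')
    (hττ' : τ * τ' = τ' * τ)
    (hcard : 8 * Nat.card (W ⊓ W' : Subgroup (Perm Ω)) < Nat.card E) :
    orbit E (τ x) ≠ orbit E (τ' x') := by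
  intro hO
  have hWE₁ : W ≤ E := le_sup_left.trans_eq hWE
  have hWE₂ : W' ≤ E := le_sup_right.trans_eq hWE
  obtain ⟨g, hg, hgx⟩ := mem_orbit_perm.1 (hO ▸ mem_orbit_self (M := E) (τ' x'))
  obtain ⟨w', hw', w, hw, rfl⟩ : ∃ w' ∈ W', ∃ w ∈ W, w' * w = g := by
    have hg' : g ∈ (↑(W' ⊔ W) : Set (Perm Ω)) := (sup_comm W W').symm.trans hWE ▸ hg
    rwa [Subgroup.coe_mul_of_left_le_normalizer_right, Set.mem_mul] at hg'
    exact Subgroup.le_normalizer_iff.2 fun a ha b hb => by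
      rwa [hE.mul_comm (hWE₂ ha) (hWE₁ hb), mul_inv_cancel_right]
  refine (h.apply hWE₁ hτW hw).apply_ne (h'.apply hWE₂ hτW' hw') hE hWE₂ hτ hτW hτW' hττ' hcard ?_
  calc τ (w x) = w (τ x) := Equiv.ext_iff.1 (hτW w hw) x
    _ = w' (τ' x') := by rw [← hgx, Perm.mul_apply, hE.apply_apply (hWE₂ hw')]
    _ = τ' (w' x') := (Equiv.ext_iff.1 (hτW' w' hw') x').symm

end TwoFourBreaks

section ParityClasses

variable {a d i : ℕ}

/-- The indices below `d` congruent to `a` modulo two. -/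
def parityClass (d a : ℕ) : Finset ℕ :=
  {j ∈ Finset.range d | j % 2 = a}

theorem mem_parityClass : i ∈ parityClass d a ↔ i < d ∧ i % 2 = a := by
  simp [parityClass]

theorem parityClass_subset_range : parityClass d a ⊆ Finset.range d :=
  Finset.filter_subset _ _

theorem nonadjacent_parityClass : Nonadjacent (parityClass d a) := fun i hi hi' => by
  rw [mem_parityClass] at hi hi'
  omega

theorem card_parityClass (ha : a < 2) : (parityClass d a).card = (d + 1 - a) / 2 := by
  induction d with
  | zero =>
    rw [parityClass, Finset.range_zero, Finset.filter_empty, Finset.card_empty]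
    omega
  | succ d ih =>
    rw [parityClass, Finset.range_add_one, Finset.filter_insert]
    split_ifs with hd
    · rw [Finset.card_insert_of_notMem (by simp), ← parityClass, ih]
      omega
    · rw [← parityClass, ih]
      omega

variable {G : Type*} [Group G] {σ : ℕ → G}

/-- The elementary abelian group generated by the `σ j` with `j < d` even. -/
abbrev evenGroup (σ : ℕ → G) (d : ℕ) : Subgroup G :=
  gen σ (parityClass d 0)

/-- The elementary abelian group generated by the `σ j` with `j < d` odd. -/
abbrev oddGroup (σ : ℕ → G) (d : ℕ) : Subgroup G :=
  gen σ (parityClass d 1)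

/-- The subgroup of `evenGroup σ d` generated by those `σ j` which commute with `σ i`, for `i` odd
and `σ` a string. -/
abbrev evenResidue (σ : ℕ → G) (d i : ℕ) : Subgroup G :=
  gen σ (awayFrom (parityClass d 0) i)

theorem mem_evenGroup (hi : i < d) (hi2 : i % 2 = 0) : σ i ∈ evenGroup σ d :=
  mem_gen (mem_parityClass.2 ⟨hi, hi2⟩)

theorem mem_oddGroup (hi : i < d) (hi2 : i % 2 = 1) : σ i ∈ oddGroup σ d :=
  mem_gen (mem_parityClass.2 ⟨hi, hi2⟩)

theorem mem_awayFrom_parityClass {j : ℕ} :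
    j ∈ awayFrom (parityClass d a) i ↔ (j < d ∧ j % 2 = a) ∧ j ≠ i + 1 ∧ j + 1 ≠ i := by
  rw [awayFrom, Finset.mem_filter, mem_parityClass]

theorem mem_evenResidue {j : ℕ} (hj : j < d) (hj2 : j % 2 = 0) (hji : j ≠ i + 1)
    (hij : j + 1 ≠ i) : σ j ∈ evenResidue σ d i :=
  mem_gen (mem_awayFrom_parityClass.2 ⟨⟨hj, hj2⟩, hji, hij⟩)

end ParityClasses

section LengthBound

variable {Ω : Type*} {σ : ℕ → Perm Ω} {a d i : ℕ}

theorem IsIndepString.isMaxElementary (h : IsIndepString d σ) (ha : a < 2)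
    (hd : (d + 1 - a) / 2 = Nat.card Ω / 2) : IsMaxElementary (gen σ (parityClass d a)) :=
  h.isMaxElementary_gen parityClass_subset_range nonadjacent_parityClass
    ((card_parityClass ha).trans hd)

theorem IsIndepString.isMaxElementary_evenGroup (h : IsIndepString d σ)
    (hcard : Nat.card Ω = d + 1) : IsMaxElementary (evenGroup σ d) :=
  h.isMaxElementary two_pos (by omega)

theorem IsIndepString.isMaxElementary_oddGroup (h : IsIndepString d σ)
    (hcard : Nat.card Ω = d + 1) (hd : d % 2 = 0) : IsMaxElementary (oddGroup σ d) :=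
  h.isMaxElementary one_lt_two (by omega)

theorem IsIndepString.exists_isOneTwoBreak [Finite Ω] [DecidableEq Ω] (h : IsIndepString d σ)
    {J : Finset ℕ} (hJ : J ⊆ Finset.range d) (hadj : Nonadjacent J)
    (hE : IsMaxElementary (gen σ J)) (hi : i < d) (hiJ : i ∉ J) (hend : i + 1 ∉ J ∨ i = 0) :
    ∃ x y, IsOneTwoBreak (gen σ J) (gen σ (awayFrom J i)) (σ i) x y :=
  hE.exists_isOneTwoBreak gen_awayFrom_le_gen (h.mul_self i hi)
    (h.mul_comm_of_mem_awayFrom hJ hi) (h.card_gen_le_two_mul hJ hadj hend)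
    (h.not_normalizes hJ hadj hE hi hiJ)

theorem IsIndepString.lt_card [Finite Ω] [Nonempty Ω] (h : IsIndepString d σ) :
    d < Nat.card Ω := by
  classical
  by_contra! hd
  replace h := h.of_le hd
  have hpos : 0 < Nat.card Ω := Nat.card_pos
  set m := Nat.card Ω
  have hJ : parityClass m 0 ⊆ Finset.range m := parityClass_subset_range
  have heven : (m + 1) / 2 = m / 2 := by
    refine le_antisymm ((Nat.pow_le_pow_iff_right one_lt_two).1 ?_) (by omega)
    have hJcard : (parityClass m 0).card = (m + 1) / 2 := card_parityClass two_pos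
    rw [← hJcard, ← h.card_gen hJ nonadjacent_parityClass]
    exact card_le_two_pow fun g hg => h.mul_self_of_mem_gen hJ nonadjacent_parityClass hg
  have hE := h.isMaxElementary two_pos heven
  obtain ⟨x, y, hxy⟩ := h.exists_isOneTwoBreak (i := m - 1) hJ nonadjacent_parityClass hE
    (by omega) (by rw [mem_parityClass]; omega) (.inl (by rw [mem_parityClass]; omega))
  have := hE.odd_card_of_fixed hxy.fixed
  exact Nat.not_even_iff_odd.2 this (Nat.even_iff.2 (by omega))

end LengthBound

section LastGenerator

theorem IsOneTwoBreak.swap_mul_eq {Ω : Type*} [Finite Ω] [DecidableEq Ω]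
    {E W : Subgroup (Perm Ω)} {τ s : Perm Ω} {x y : Ω} (h : IsOneTwoBreak E W τ x y)
    (hE : IsMaxElementary E) (hs : s ∈ E) (hsW : s ∉ W)
    (hcube : ∀ g ∈ W, g ∈ Subgroup.closure {τ, s} → g = 1) :
    s (τ x) = y ∧ swap x (τ x) * τ = swap (τ x) y * s := by
  have hWE : W ≤ E := h.fixer_eq ▸ fixer_le
  have hfix : ∀ g ∈ W, ∀ z ∈ ({x, τ x, y} : Set Ω), g z = z := fun g hg =>
    (mem_fixer.1 (h.fixer_eq.symm ▸ hg)).2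
  have hsx := h.fixed s hs
  have hyO : y ∈ orbit E (τ x) := by simp [h.orbit_apply]
  have hyx : x ≠ y := by
    rintro rfl
    exact h.apply_ne h.apply_eq
  have hsτx : s (τ x) = y := by
    have hmem := apply_mem_orbit hs (τ x)
    rw [h.orbit_apply] at hmem
    refine hmem.resolve_left fun hsτx => hsW ?_
    rw [← h.fixer_eq]
    refine mem_fixer.2 ⟨hs, ?_⟩
    rintro z (rfl | rfl | rfl)
    exacts [hsx, hsτx, hE.apply_eq_of_mem_orbit hs hyO hsτx]
  refine ⟨hsτx, swap_mul_eq_swap_mul (fun g hg => hE.mul_self g (hWE hg)) (fun g hg =>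
    ⟨hfix g hg _ (by simp), hfix g hg _ (by simp), hfix g hg _ (by simp)⟩) h.apply_ne.symm hyx
    h.ne h.swap_mul_mem ?_ hcube⟩
  rw [← hsτx]
  refine hE.swap_mul_mem (S := {x, τ x, y}) (hE.mul_self s hs)
    (fun w hw => hE.mul_comm hs (hWE hw)) (fun g hg => ?_) h.fixer_eq (by simp)
    (by simp [hsτx]) ?_
  · simpa [h.orbit_apply, h.fixed g hg] using (mapsTo_orbit hg (τ x)).insert x
  · rintro z (rfl | rfl | rfl) hz hz'
    exacts [hsx, absurd rfl hz, absurd hsτx.symm hz']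

theorem apply_eq_of_commute_three_cycle {Ω : Type*} {g c : Perm Ω} {a : Ω} (hg : g * g = 1)
    (hcomm : Commute g c) (hca : c a ≠ a) (hccc : c (c (c a)) = a)
    (hc : ∀ z, c z ≠ z → z = a ∨ z = c a ∨ z = c (c a)) : g a = a := by
  have hgg : g (g a) = a := Equiv.ext_iff.1 hg a
  have hgc : ∀ z, g (c z) = c (g z) := Equiv.ext_iff.1 hcomm.eq
  obtain hga | hga | hga := hc (g a) fun hfix => hca (g.injective ((hgc a).trans hfix))
  · exact hga
  · have hcca : c (c a) = a := by rw [← hga, ← hgc, ← hga, hgg]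
    exact absurd ((congrArg c hcca).symm.trans hccc) hca
  · have hga' : g (g a) = c (c (c (c a))) := by rw [hga, hgc, hgc, hga]
    rw [hgg, hccc] at hga'
    exact absurd hga'.symm hca

section SwapClasses

variable {Ω : Type*} [DecidableEq Ω] {K : Subgroup (Perm Ω)} {g : Perm Ω} {a b c z : Ω}

/-- The points `z` such that the transposition of `a` and `z` lies in `K` (or `z = a`): the class of
`a` for an equivalence relation preserved by `K`. -/
def swapClass (K : Subgroup (Perm Ω)) (a : Ω) : Set Ω :=
  {z | swap a z ∈ K}

theorem mem_swapClass : b ∈ swapClass K a ↔ swap a b ∈ K :=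
  Iff.rfl

theorem mem_swapClass_self : a ∈ swapClass K a := by
  rw [mem_swapClass, swap_self]
  exact one_mem K

theorem mem_swapClass_symm (h : b ∈ swapClass K a) : a ∈ swapClass K b := by
  rwa [mem_swapClass, swap_comm]

theorem mem_swapClass_trans (hab : b ∈ swapClass K a) (hbc : c ∈ swapClass K b) :
    c ∈ swapClass K a := by
  obtain rfl | hba := eq_or_ne a b
  · exact hbc
  obtain rfl | hca := eq_or_ne a c
  · exact mem_swapClass_self
  · rw [mem_swapClass, swap_comm, ← swap_mul_swap_mul_swap hba hca]
    exact mul_mem (mul_mem hbc hab) hbc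

theorem apply_mem_swapClass (hg : g ∈ K) (hz : z ∈ swapClass K a) : g z ∈ swapClass K (g a) := by
  rw [mem_swapClass, swap_apply_apply]
  exact mul_mem (mul_mem hg hz) (inv_mem hg)

theorem image_swapClass (hg : g ∈ K) : g '' swapClass K a = swapClass K (g a) := by
  refine Set.Subset.antisymm (Set.image_subset_iff.2 fun z hz => apply_mem_swapClass hg hz)
    fun z hz => ⟨g⁻¹ z, ?_, by simp⟩
  simpa using apply_mem_swapClass (inv_mem hg) hz

theorem mapsTo_swapClass_union (hg : g ∈ K) (ha : g a ∈ swapClass K a ∪ swapClass K b)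
    (hb : g b ∈ swapClass K a ∪ swapClass K b) :
    Set.MapsTo g (swapClass K a ∪ swapClass K b) (swapClass K a ∪ swapClass K b) := by
  rintro z (hz | hz)
  · exact ha.imp (mem_swapClass_trans · (apply_mem_swapClass hg hz))
      (mem_swapClass_trans · (apply_mem_swapClass hg hz))
  · exact hb.imp (mem_swapClass_trans · (apply_mem_swapClass hg hz))
      (mem_swapClass_trans · (apply_mem_swapClass hg hz))

theorem mapsTo_swap_swapClass_union :
    Set.MapsTo (swap a b) (swapClass K a ∪ swapClass K b) (swapClass K a ∪ swapClass K b) := by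
  intro z hz
  obtain rfl | hza := eq_or_ne z a
  · exact .inr (by simpa using mem_swapClass_self)
  obtain rfl | hzb := eq_or_ne z b
  · exact .inl (by simpa using mem_swapClass_self)
  · rwa [swap_apply_of_ne_of_ne hza hzb]

theorem ncard_swapClass_union [Finite Ω] (hab : swap a (g a) ∉ K) (hg : g ∈ K) :
    (swapClass K a ∪ swapClass K (g a)).ncard = 2 * (swapClass K a).ncard := by
  rw [Set.ncard_union_eq ?_ (Set.toFinite _) (Set.toFinite _), ← image_swapClass hg,
    Set.ncard_image_of_injective _ g.injective, two_mul]
  exact Set.disjoint_left.2 fun z hz hz' =>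
    hab (mem_swapClass_trans hz (mem_swapClass_symm hz'))

theorem swapClass_union_eq_univ [Finite Ω] {σ : ℕ → Perm Ω} {J : Finset ℕ}
    [IsPretransitive (gen σ J) Ω]
    (hJ : ∀ j ∈ J, σ j = swap a b ∨ σ j ∈ K ∧ σ j a ∈ swapClass K a ∪ swapClass K b ∧
      σ j b ∈ swapClass K a ∪ swapClass K b) :
    swapClass K a ∪ swapClass K b = Set.univ := by
  refine Set.eq_univ_of_forall fun z => ?_
  obtain ⟨⟨g, hg⟩, rfl⟩ := exists_smul_eq (gen σ J) a z
  refine mapsTo_of_mem_closure (Set.forall_mem_image.2 fun j hj => ?_) hg (.inl mem_swapClass_self)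
  obtain hjab | ⟨hjK, hja, hjb⟩ := hJ j hj
  · exact hjab ▸ mapsTo_swap_swapClass_union
  · exact mapsTo_swapClass_union hjK hja hjb

end SwapClasses

namespace IsIndepString

variable {Ω : Type*} [Finite Ω] [DecidableEq Ω] {σ : ℕ → Perm Ω} {d k : ℕ} {o y : Ω}
  (h : IsIndepString d σ) (hcard : Nat.card Ω = d + 1) (hd : d % 2 = 0) (hd6 : 6 ≤ d)
  (hb : IsOneTwoBreak (evenGroup σ d) (evenResidue σ d (d - 1)) (σ (d - 1)) o y)
include h hcard hd hd6

theorem exists_last_isOneTwoBreak : ∃ o y,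
    IsOneTwoBreak (evenGroup σ d) (evenResidue σ d (d - 1)) (σ (d - 1)) o y :=
  h.exists_isOneTwoBreak parityClass_subset_range nonadjacent_parityClass
    (h.isMaxElementary_evenGroup hcard) (by omega) (by rw [mem_parityClass]; omega)
    (.inl (by rw [mem_parityClass]; omega))

include hb

theorem last_swap_mul_eq : σ (d - 2) (σ (d - 1) o) = y ∧
    swap o (σ (d - 1) o) * σ (d - 1) = swap (σ (d - 1) o) y * σ (d - 2) := by
  refine hb.swap_mul_eq (h.isMaxElementary_evenGroup hcard)
    (mem_evenGroup (by omega) (by omega)) ?_ fun g hg hg' => ?_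
  · refine h.notMem_gen_of_notMem (awayFrom_subset.trans parityClass_subset_range) (by omega) ?_
    rw [mem_awayFrom_parityClass]
    omega
  · exact h.eq_one_of_mem_closure_pair parityClass_subset_range nonadjacent_parityClass
      (i := d - 1) (j := d - 2) (.inr (by omega)) (by omega) (by rw [mem_parityClass]; omega)
      hg hg' (by omega)

theorem last_mul : σ (d - 1) * σ (d - 2) =
    swap o (σ (d - 1) o) * swap (σ (d - 1) o) y := by
  obtain ⟨-, heq⟩ := h.last_swap_mul_eq hcard hd hd6 hb
  calc σ (d - 1) * σ (d - 2)
      = swap o (σ (d - 1) o) * (swap o (σ (d - 1) o) * σ (d - 1)) * σ (d - 2) := by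
        rw [swap_mul_self_mul]
    _ = swap o (σ (d - 1) o) * swap (σ (d - 1) o) y := by
        rw [heq, mul_assoc, mul_assoc, h.mul_self (d - 2) (by omega), mul_one]

theorem last_fixed (hk2 : k % 2 = 1) (hkd : k + 5 ≤ d) :
    σ k o = o ∧ σ k (σ (d - 1) o) = σ (d - 1) o ∧ σ k y = y := by
  have hox := hb.apply_ne
  have hxy := hb.ne
  have hyo : y ≠ o := by
    rintro rfl
    exact hox hb.apply_eq
  have hcomm : Commute (σ k) (σ (d - 1) * σ (d - 2)) :=
    Commute.mul_right (h.mul_comm k (d - 1) (by omega) (by omega))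
      (h.mul_comm k (d - 2) (by omega) (by omega))
  set c := σ (d - 1) * σ (d - 2) with hc
  rw [h.last_mul hcard hd hd6 hb] at hc
  have hco : c o = σ (d - 1) o := by
    rw [hc, Perm.mul_apply, swap_apply_of_ne_of_ne hox.symm hyo.symm, swap_apply_left]
  have hcx : c (σ (d - 1) o) = y := by
    rw [hc, Perm.mul_apply, swap_apply_left, swap_apply_of_ne_of_ne hyo hxy]
  have hcy : c y = o := by rw [hc, Perm.mul_apply, swap_apply_right, swap_apply_right]
  have hgc : ∀ z, σ k (c z) = c (σ k z) := Equiv.ext_iff.1 hcomm.eq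
  have ho : σ k o = o := by
    refine apply_eq_of_commute_three_cycle (h.mul_self k (by omega)) hcomm (by rwa [hco])
      (by rw [hco, hcx, hcy]) fun z hz => ?_
    by_contra! hne
    rw [hco, hcx] at hne
    rw [hc, Perm.mul_apply, swap_apply_of_ne_of_ne hne.2.1 hne.2.2,
      swap_apply_of_ne_of_ne hne.1 hne.2.1] at hz
    exact hz rfl
  have hx : σ k (σ (d - 1) o) = σ (d - 1) o := by rw [← hco, hgc, ho]
  exact ⟨ho, hx, by rw [← hcx, hgc, hx]⟩

theorem ncard_oddOrbit_last_union_div_two_le :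
    (orbit (oddGroup σ d) o ∪ orbit (oddGroup σ d) y).ncard / 2 ≤ 2 := by
  have hF := h.isMaxElementary_oddGroup hcard hd
  have hle : gen σ (awayFrom (parityClass d 1) (d - 2)) ≤
      fixer (oddGroup σ d) (orbit (oddGroup σ d) o ∪ orbit (oddGroup σ d) y) := by
    refine gen_le.2 fun j hj => mem_fixer.2 ⟨mem_gen (awayFrom_subset hj), ?_⟩
    rw [mem_awayFrom_parityClass] at hj
    obtain ⟨ho, -, hy⟩ := h.last_fixed hcard hd hd6 hb (k := j) hj.1.2 (by omega)
    have hjF : σ j ∈ oddGroup σ d := mem_oddGroup hj.1.1 hj.1.2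
    rintro z (hz | hz)
    exacts [hF.apply_eq_of_mem_orbit hjF hz ho, hF.apply_eq_of_mem_orbit hjF hz hy]
  refine (Nat.pow_le_pow_iff_right one_lt_two).1 (Nat.le_of_mul_le_mul_right ?_
    (Nat.card_pos (α := fixer (oddGroup σ d) (orbit (oddGroup σ d) o ∪ orbit (oddGroup σ d) y))))
  rw [← hF.card_eq_mul_card_fixer fun g hg => mapsTo_orbit_union_orbit hg]
  exact (h.card_gen_le_four_mul parityClass_subset_range nonadjacent_parityClass (d - 2)).trans
    (Nat.mul_le_mul_left 4 (Subgroup.card_le_of_le hle))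

theorem ncard_oddOrbit_last : (orbit (oddGroup σ d) o).ncard = 2 := by
  have hF := h.isMaxElementary_oddGroup hcard hd
  have hτF : σ (d - 1) ∈ oddGroup σ d := mem_oddGroup (by omega) (by omega)
  have hyO : y ∉ orbit (oddGroup σ d) o := fun hy =>
    hb.apply_ne (hF.apply_eq_of_mem_orbit hτF (mem_orbit_symm.1 hy) hb.apply_eq)
  have hy : (orbit (oddGroup σ d) y).ncard ≠ 1 := fun hy => by
    obtain ⟨o', y', hb'⟩ := h.exists_isOneTwoBreak (i := 0) parityClass_subset_range
      nonadjacent_parityClass hF (by omega) (by rw [mem_parityClass]; omega) (.inr rfl)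
    refine hb'.apply_ne ?_
    rw [hF.eq_of_fixed hb'.fixed (fixed_of_ncard_orbit_eq_one hy)]
    have hW : σ 0 ∈ evenResidue σ d (d - 1) :=
      mem_evenResidue (by omega) (by omega) (by omega) (by omega)
    exact (mem_fixer.1 (hb.fixer_eq.symm ▸ hW)).2 y (by simp)
  have hle := h.ncard_oddOrbit_last_union_div_two_le hcard hd hd6 hb
  have ho : (orbit (oddGroup σ d) o).ncard ≠ 1 := fun ho =>
    hb.apply_ne (fixed_of_ncard_orbit_eq_one ho _ hτF)
  rw [Set.ncard_union_eq ((orbit.eq_or_disjoint o y).resolve_left fun heq =>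
    hyO (heq.symm ▸ mem_orbit_self y)) (Set.toFinite _) (Set.toFinite _)] at hle
  have := hF.ncard_orbit o
  have := hF.ncard_orbit y
  omega

theorem apply_mem_pair_of_mem_oddGroup {g : Perm Ω} (hg : g ∈ oddGroup σ d) :
    g o = o ∨ g o = σ (d - 1) o := by
  have hτF : σ (d - 1) ∈ oddGroup σ d := mem_oddGroup (by omega) (by omega)
  obtain ⟨x, -, hx⟩ := exists_orbit_eq_pair (h.ncard_oddOrbit_last hcard hd hd6 hb)
  obtain rfl : σ (d - 1) o = x :=
    (hx ▸ apply_mem_orbit hτF o : σ (d - 1) o ∈ ({o, x} : Set Ω)).resolve_left hb.apply_ne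
  exact (hx ▸ apply_mem_orbit hg o : g o ∈ ({o, σ (d - 1) o} : Set Ω))

theorem commute_swap_last_of_mem_oddGroup {g : Perm Ω} (hg : g ∈ oddGroup σ d) :
    Commute g (swap o (σ (d - 1) o)) := by
  have hF := h.isMaxElementary_oddGroup hcard hd
  have hτF : σ (d - 1) ∈ oddGroup σ d := mem_oddGroup (by omega) (by omega)
  have hgx : g (σ (d - 1) o) = σ (d - 1) (g o) := hF.apply_comm hg hτF o
  rw [commute_iff_eq, mul_swap_eq_swap_mul, hgx]
  rcases h.apply_mem_pair_of_mem_oddGroup hcard hd hd6 hb hg with hgo | hgo <;> rw [hgo]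
  rw [hF.apply_apply hτF, swap_comm]

theorem last_eq_swap [IsPretransitive (gen σ (Finset.range d)) Ω] :
    σ (d - 1) = swap o (σ (d - 1) o) := by
  have hE := h.isMaxElementary_evenGroup hcard
  have hF := h.isMaxElementary_oddGroup hcard hd
  have hvE : swap o (σ (d - 1) o) * σ (d - 1) ∈ evenGroup σ d :=
    gen_awayFrom_le_gen hb.swap_mul_mem
  have hτF : σ (d - 1) ∈ oddGroup σ d := mem_oddGroup (by omega) (by omega)
  have hcomm : ∀ g ∈ gen σ (Finset.range d),
      swap o (σ (d - 1) o) * σ (d - 1) * g = g * (swap o (σ (d - 1) o) * σ (d - 1)) := by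
    intro g hg
    refine mul_comm_of_mem_gen (fun j hj => ?_) hg
    have hjd := Finset.mem_range.1 hj
    rcases Nat.mod_two_eq_zero_or_one j with hj2 | hj2
    · exact hE.mul_comm hvE (mem_evenGroup hjd hj2)
    · have hjF : σ j ∈ oddGroup σ d := mem_oddGroup hjd hj2
      exact ((h.commute_swap_last_of_mem_oddGroup hcard hd hd6 hb hjF).mul_right
        (hF.mul_comm hjF hτF)).eq.symm
  suffices hone : swap o (σ (d - 1) o) * σ (d - 1) = 1 from
    eq_swap_of_swap_mul_eq_one hone
  refine Equiv.ext fun z => ?_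
  obtain ⟨⟨g, hg⟩, rfl⟩ := exists_smul_eq (gen σ (Finset.range d)) o z
  calc (swap o (σ (d - 1) o) * σ (d - 1)) (g o)
      = g ((swap o (σ (d - 1) o) * σ (d - 1)) o) := Equiv.ext_iff.1 (hcomm g hg) o
    _ = g o := congrArg g (hb.fixed _ hvE)

theorem last_even_eq_swap [IsPretransitive (gen σ (Finset.range d)) Ω] :
    σ (d - 2) = swap (σ (d - 1) o) y := by
  have heq := (h.last_swap_mul_eq hcard hd hd6 hb).2
  have hone : swap (σ (d - 1) o) y * σ (d - 2) = 1 := by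
    rw [← heq]
    nth_rw 2 [h.last_eq_swap hcard hd hd6 hb]
    exact swap_mul_self _ _
  exact eq_swap_of_swap_mul_eq_one hone

theorem fixed_of_add_four_le (hk : k + 4 ≤ d) : σ k o = o ∧ σ k (σ (d - 1) o) = σ (d - 1) o := by
  rcases Nat.mod_two_eq_zero_or_one k with hk2 | hk2
  · have hkW : σ k ∈ evenResidue σ d (d - 1) :=
      mem_evenResidue (by omega) hk2 (by omega) (by omega)
    have hfix := (mem_fixer.1 (hb.fixer_eq.symm ▸ hkW)).2
    exact ⟨hfix o (by simp), hfix _ (by simp)⟩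
  · obtain ⟨ho, hx, -⟩ := h.last_fixed hcard hd hd6 hb hk2 (by omega)
    exact ⟨ho, hx⟩

theorem penultimate_odd_fixed [IsPretransitive (gen σ (Finset.range d)) Ω] :
    σ (d - 3) o = o := by
  by_contra hne
  have hlast := h.last_eq_swap hcard hd hd6 hb
  have hs : σ (d - 2) (σ (d - 1) o) = y := (h.last_swap_mul_eq hcard hd hd6 hb).1
  have hρF : σ (d - 3) ∈ oddGroup σ d := mem_oddGroup (by omega) (by omega)
  have hρ : σ (d - 3) o = σ (d - 1) o :=
    (h.apply_mem_pair_of_mem_oddGroup hcard hd hd6 hb hρF).resolve_left hne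
  have hρx : σ (d - 3) (σ (d - 1) o) = o := by
    rw [← hρ]
    exact Equiv.ext_iff.1 (h.mul_self (d - 3) (by omega)) o
  set x := σ (d - 1) o
  set K := gen σ ((Finset.range d).erase (d - 1))
  have hgenK : ∀ j, j + 1 < d → σ j ∈ K := fun j hj =>
    mem_gen (Finset.mem_erase.2 ⟨by omega, Finset.mem_range.2 (by omega)⟩)
  have hK : ∀ j, j + 1 < d → σ j o ∈ swapClass K o ∪ swapClass K x ∧
      σ j x ∈ swapClass K o ∪ swapClass K x := by
    intro j hj
    obtain rfl | rfl | hj4 : j = d - 2 ∨ j = d - 3 ∨ j + 4 ≤ d := by omega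
    · have hsK : swap x y ∈ K := h.last_even_eq_swap hcard hd hd6 hb ▸ hgenK (d - 2) hj
      rw [hs, hb.fixed _ (mem_evenGroup (by omega) (by omega))]
      exact ⟨.inl mem_swapClass_self, .inr hsK⟩
    · rw [hρ, hρx]
      exact ⟨.inr mem_swapClass_self, .inl mem_swapClass_self⟩
    · obtain ⟨ho, hx⟩ := h.fixed_of_add_four_le hcard hd hd6 hb hj4
      rw [ho, hx]
      exact ⟨.inl mem_swapClass_self, .inr mem_swapClass_self⟩
  have huniv : swapClass K o ∪ swapClass K x = Set.univ := by
    refine swapClass_union_eq_univ (σ := σ) (J := Finset.range d) fun j hj => ?_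
    obtain rfl | hjd : j = d - 1 ∨ j + 1 < d := by
      have := Finset.mem_range.1 hj
      omega
    exacts [.inl hlast, .inr ⟨hgenK j hjd, hK j hjd⟩]
  have hτK : swap o (σ (d - 3) o) ∉ K := by
    rw [hρ, ← hlast]
    exact h.notMem_gen (d - 1) (by omega)
  have hcardΩ := ncard_swapClass_union hτK (hgenK (d - 3) (by omega))
  rw [hρ, huniv, Set.ncard_univ] at hcardΩ
  omega

end IsIndepString

end LastGenerator

section Transpositions

variable {G : Type*} [Group G] {σ : ℕ → G} {d i j l : ℕ} {J : Finset ℕ}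

namespace IsIndepString

theorem gen_erase_lt (h : IsIndepString d σ) (hJ : J ⊆ Finset.range d) (hj : j ∈ J) :
    gen σ (J.erase j) < gen σ J := by
  refine (gen_mono (Finset.erase_subset j J)).lt_of_not_ge fun hle => ?_
  exact h.notMem_gen_of_notMem ((Finset.erase_subset j J).trans hJ) (Finset.mem_range.1 (hJ hj))
    (Finset.notMem_erase j J) (hle (mem_gen hj))

theorem card_inf_gen_mul_le (h : IsIndepString d σ) (hJ : J ⊆ Finset.range d)
    (hadj : Nonadjacent J) {J₁ J₂ S : Finset ℕ} (hJ₁ : J₁ ⊆ J) (hJ₂ : J₂ ⊆ J) (hS : S ⊆ J)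
    (hSJ : ∀ c ∈ S, c ∉ J₁ ∨ c ∉ J₂) :
    2 ^ S.card * Nat.card (gen σ J₁ ⊓ gen σ J₂ : Subgroup G) ≤ Nat.card (gen σ J) := by
  have herase : ∀ {J' : Finset ℕ} {c : ℕ}, J' ⊆ J → c ∉ J' → J' ⊆ (Finset.range d).erase c :=
    fun hJ' hc => Finset.subset_erase.2 ⟨hJ'.trans hJ, hc⟩
  have hle : gen σ J₁ ⊓ gen σ J₂ ≤ gen σ (J \ S) := fun g hg =>
    h.mem_gen_sdiff hJ hadj (gen_mono hJ₁ hg.1) fun c hc =>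
      (hSJ c hc).elim (fun hc₁ => gen_mono (herase hJ₁ hc₁) hg.1)
        fun hc₂ => gen_mono (herase hJ₂ hc₂) hg.2
  have hsub : J \ S ⊆ J := Finset.sdiff_subset
  have hcard := h.card_gen (hsub.trans hJ) fun i hi hi' => hadj i (hsub hi) (hsub hi')
  have : Finite (gen σ (J \ S)) := Nat.finite_of_card_ne_zero (hcard ▸ (by positivity))
  refine (Nat.mul_le_mul_left _ (Subgroup.card_le_of_le hle)).trans ?_
  rw [hcard, h.card_gen hJ hadj, ← pow_add, add_comm, Finset.card_sdiff_add_card_eq_card hS]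

end IsIndepString

theorem evenResidue_le_gen_erase (hij : j = i + 1 ∨ j + 1 = i) :
    evenResidue σ d i ≤ gen σ ((parityClass d 0).erase j) := by
  refine gen_mono fun c hc => ?_
  rw [mem_awayFrom_parityClass] at hc
  rw [Finset.mem_erase, mem_parityClass]
  exact ⟨by omega, hc.1⟩

theorem gen_awayFrom_sup_gen_awayFrom (hil : i + 2 < l) :
    gen σ (awayFrom J i) ⊔ gen σ (awayFrom J l) = gen σ J := by
  rw [← gen_union]
  congr 1
  ext c
  simp only [awayFrom, Finset.mem_union, Finset.mem_filter]
  have : c ≠ i + 1 ∧ c + 1 ≠ i ∨ c ≠ l + 1 ∧ c + 1 ≠ l := by omega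
  tauto

theorem IsOneTwoBreak.mapsTo {Ω : Type*} [DecidableEq Ω] {E W : Subgroup (Perm Ω)}
    {τ g : Perm Ω} {x y : Ω} (h : IsOneTwoBreak E W τ x y) (hg : g ∈ E) :
    Set.MapsTo g {x, τ x, y} {x, τ x, y} := by
  rw [← Set.singleton_union, ← h.orbit_apply, ← orbit_eq_singleton_iff.2 h.fixed]
  exact mapsTo_orbit_union_orbit hg

namespace IsIndepString

variable {Ω : Type*} [Finite Ω] {σ : ℕ → Perm Ω} {d i j l : ℕ} {S T : Set Ω} {x z : Ω}
  (h : IsIndepString d σ) (hcard : Nat.card Ω = d + 1) (hd6 : 6 ≤ d)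
include h hcard

theorem orbit_apply_subset_of_isTwoFourBreak
    (hx : IsTwoFourBreak (evenGroup σ d) (evenResidue σ d i) (σ i) x)
    (hS : ∀ g ∈ evenGroup σ d, Set.MapsTo g S S)
    (hSl : fixer (evenGroup σ d) S ≤ evenResidue σ d l) (hl2 : l % 2 = 1) (hid : i < d)
    (hld : l < d) (hil : l = i + 2 ∨ i = l + 2) : orbit (evenGroup σ d) (σ i x) ⊆ S := by
  have hj : (i + l) / 2 ∈ parityClass d 0 := by
    rw [mem_parityClass]
    omega
  exact hx.orbit_apply_subset (h.isMaxElementary_evenGroup hcard) hS hSl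
    (evenResidue_le_gen_erase (by omega)) (evenResidue_le_gen_erase (by omega))
    (h.gen_erase_lt parityClass_subset_range hj)

theorem inter_nonempty_of_fixer_le
    (hS : ∀ g ∈ evenGroup σ d, Set.MapsTo g S S)
    (hSi : fixer (evenGroup σ d) S ≤ evenResidue σ d i)
    (hTl : fixer (evenGroup σ d) T ≤ evenResidue σ d l) (hl2 : l % 2 = 1) (hid : i < d)
    (hld : l < d) (hil : l = i + 2 ∨ i = l + 2) : (S ∩ T).Nonempty := by
  by_contra hempty
  have hj : (i + l) / 2 ∈ parityClass d 0 := by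
    rw [mem_parityClass]
    omega
  have hle : fixer (evenGroup σ d) (S ∩ T) ≤ gen σ ((parityClass d 0).erase ((i + l) / 2)) :=
    ((h.isMaxElementary_evenGroup hcard).fixer_inter_le hS).trans <|
      sup_le (hSi.trans (evenResidue_le_gen_erase (by omega)))
        (hTl.trans (evenResidue_le_gen_erase (by omega)))
  refine (h.gen_erase_lt parityClass_subset_range hj).not_ge fun g hg => hle ?_
  rw [Set.not_nonempty_iff_eq_empty.1 hempty]
  exact mem_fixer.2 ⟨hg, fun z hz => hz.elim⟩

variable [IsPretransitive (gen σ (Finset.range d)) Ω]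
include hd6

theorem apply_eq_of_fixed (hi2 : i % 2 = 1) (hid : i + 1 < d)
    (hz : ∀ g ∈ evenGroup σ d, g z = z) : σ i z = z := by
  classical
  have hE := h.isMaxElementary_evenGroup hcard
  have hd : d % 2 = 0 := by
    have := Nat.odd_iff.1 (hE.odd_card_of_fixed hz)
    omega
  obtain ⟨o, y, hb⟩ := h.exists_last_isOneTwoBreak hcard hd hd6
  obtain rfl := hE.eq_of_fixed hz hb.fixed
  obtain rfl | hi4 : i = d - 3 ∨ i + 4 ≤ d := by omega
  · exact h.penultimate_odd_fixed hcard hd hd6 hb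
  · exact (h.fixed_of_add_four_le hcard hd hd6 hb hi4).1

theorem exists_break [DecidableEq Ω] (hi2 : i % 2 = 1) (hid : i + 1 < d) :
    (∃ x, IsTwoTwoBreak (evenGroup σ d) (evenResidue σ d i) (σ i) x) ∨
      ∃ x, IsTwoFourBreak (evenGroup σ d) (evenResidue σ d i) (σ i) x := by
  have hE := h.isMaxElementary_evenGroup hcard
  have hJ : parityClass d 0 ⊆ Finset.range d := parityClass_subset_range
  refine hE.exists_break gen_awayFrom_le_gen (h.mul_self i (by omega))
    (h.mul_comm_of_mem_awayFrom hJ (by omega)) (h.card_gen_le_four_mul hJ nonadjacent_parityClass i)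
    (fun _ => h.apply_eq_of_fixed hcard hd6 hi2 hid)
    (h.not_normalizes hJ nonadjacent_parityClass hE (by omega) ?_)
  rw [mem_parityClass]
  omega

theorem exists_isTwoFourBreak_of_adjacent
    (hx : IsTwoFourBreak (evenGroup σ d) (evenResidue σ d i) (σ i) x) (hid : i < d)
    (hl2 : l % 2 = 1) (hld : l + 1 < d) (hil : l = i + 2 ∨ i = l + 2) :
    ∃ x', IsTwoFourBreak (evenGroup σ d) (evenResidue σ d l) (σ l) x' ∧
      orbit (evenGroup σ d) (σ i x) = orbit (evenGroup σ d) (σ l x') := by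
  classical
  have hsub {x' : Ω} := h.orbit_apply_subset_of_isTwoFourBreak hcard hx
    (S := orbit (evenGroup σ d) x' ∪ orbit (evenGroup σ d) (σ l x'))
    (fun g hg => mapsTo_orbit_union_orbit hg) (l := l)
  rcases h.exists_break hcard hd6 hl2 hld with ⟨x', hx'⟩ | ⟨x', hx'⟩
  · have h4 := hx.ncard_right
    rcases hsub hx'.fixer_eq.le hl2 hid (by omega) hil (mem_orbit_self _) with hmem | hmem <;>
      rw [orbit_eq_iff.2 hmem] at h4
    · exact absurd (hx'.ncard_left.symm.trans h4) (by decide)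
    · exact absurd (hx'.ncard_right.symm.trans h4) (by decide)
  · refine ⟨x', hx', ?_⟩
    rcases hsub hx'.fixer_orbit_le hl2 hid (by omega) hil (mem_orbit_self _) with hmem | hmem
    · have h4 := hx.ncard_right
      rw [orbit_eq_iff.2 hmem] at h4
      exact absurd (hx'.ncard_left.symm.trans h4) (by decide)
    · exact orbit_eq_iff.2 hmem

theorem exists_isTwoFourBreak_one {k : ℕ} (hk : 2 * k + 2 < d)
    (hx : IsTwoFourBreak (evenGroup σ d) (evenResidue σ d (2 * k + 1)) (σ (2 * k + 1)) x) :
    ∃ x', IsTwoFourBreak (evenGroup σ d) (evenResidue σ d 1) (σ 1) x' := by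
  induction k generalizing x with
  | zero => exact ⟨x, hx⟩
  | succ k ih =>
    obtain ⟨x', hx', -⟩ := h.exists_isTwoFourBreak_of_adjacent hcard hd6 hx (l := 2 * k + 1)
      (by omega) (by omega) (by omega) (by omega)
    exact ih (by omega) hx'

theorem not_isTwoFourBreak_one :
    ¬IsTwoFourBreak (evenGroup σ d) (evenResidue σ d 1) (σ 1) x := by
  classical
  intro h₁
  obtain ⟨x₃, h₃, h₁₃⟩ := h.exists_isTwoFourBreak_of_adjacent hcard hd6 h₁ (l := 3) (by omega)
    (by omega) (by omega) (by omega)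
  obtain rfl | hd7 : d = 6 ∨ 7 ≤ d := by omega
  · obtain ⟨o, y, hb⟩ := h.exists_last_isOneTwoBreak hcard (by decide) le_rfl
    have hle : (orbit (evenGroup σ 6) (σ 3 x₃)).ncard ≤ ({o, σ 5 o, y} : Set Ω).ncard :=
      Set.ncard_le_ncard (h.orbit_apply_subset_of_isTwoFourBreak hcard h₃
        (fun g hg => hb.mapsTo hg) hb.fixer_eq.le (l := 5) (by omega) (by omega) (by omega)
        (by omega)) (Set.toFinite _)
    have h3 : ({o, σ 5 o, y} : Set Ω).ncard ≤ 3 := (Set.ncard_insert_le _ _).trans <|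
      Nat.succ_le_succ <| (Set.ncard_insert_le _ _).trans <| by rw [Set.ncard_singleton]
    rw [h₃.ncard_right] at hle
    omega
  · obtain ⟨x₅, h₅, h₃₅⟩ := h.exists_isTwoFourBreak_of_adjacent hcard hd6 h₃ (l := 5) (by omega)
      (by omega) (by omega) (by omega)
    have hJ : parityClass d 0 ⊆ Finset.range d := parityClass_subset_range
    refine h₁.orbit_apply_ne h₅ (h.isMaxElementary_evenGroup hcard)
      (gen_awayFrom_sup_gen_awayFrom (by omega)) (h.mul_self 1 (by omega))
      (h.mul_comm_of_mem_awayFrom hJ (by omega)) (h.mul_comm_of_mem_awayFrom hJ (by omega))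
      (h.mul_comm 1 5 (by omega) (by omega)) ?_ (h₁₃.trans h₃₅)
    have h16 : 16 * Nat.card (evenResidue σ d 1 ⊓ evenResidue σ d 5 : Subgroup (Perm Ω)) ≤
        Nat.card (evenGroup σ d) := by
      refine h.card_inf_gen_mul_le hJ nonadjacent_parityClass (S := {0, 2, 4, 6})
        awayFrom_subset awayFrom_subset ?_ (by simp [mem_awayFrom_parityClass])
      simp only [Finset.insert_subset_iff, Finset.singleton_subset_iff, mem_parityClass, and_true,
        Nat.reduceMod]
      omega
    exact (Nat.mul_lt_mul_of_pos_right (by decide) Nat.card_pos).trans_le h16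

theorem exists_isTwoTwoBreak [DecidableEq Ω] (hi2 : i % 2 = 1) (hid : i + 1 < d) :
    ∃ x, IsTwoTwoBreak (evenGroup σ d) (evenResidue σ d i) (σ i) x := by
  refine (h.exists_break hcard hd6 hi2 hid).resolve_right fun ⟨x, hx⟩ => ?_
  obtain ⟨k, rfl⟩ : ∃ k, i = 2 * k + 1 := ⟨i / 2, by omega⟩
  obtain ⟨x', hx'⟩ := h.exists_isTwoFourBreak_one hcard hd6 hid hx
  exact h.not_isTwoFourBreak_one hcard hd6 hx'

theorem exists_mapsTo_fixer_eq_evenResidue (hi2 : i % 2 = 1) (hid : i < d) :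
    ∃ S : Set Ω, (∀ g ∈ evenGroup σ d, Set.MapsTo g S S) ∧
      fixer (evenGroup σ d) S = evenResidue σ d i := by
  classical
  obtain rfl | hid' : i = d - 1 ∨ i + 1 < d := by omega
  · obtain ⟨o, y, hb⟩ := h.exists_last_isOneTwoBreak hcard (by omega) hd6
    exact ⟨_, fun g hg => hb.mapsTo hg, hb.fixer_eq⟩
  · obtain ⟨x, hx⟩ := h.exists_isTwoTwoBreak hcard hd6 hi2 hid'
    exact ⟨_, fun g hg => mapsTo_orbit_union_orbit hg, hx.fixer_eq⟩

variable [DecidableEq Ω]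

section IsTwoTwoBreak

variable (hx : IsTwoTwoBreak (evenGroup σ d) (evenResidue σ d i) (σ i) x)
include hx

theorem exists_swap_mul_eq (hi2 : i % 2 = 1) (hid : i < d) (hjd : j < d)
    (hj : j = i + 1 ∧ l + 2 = i ∨ j + 1 = i ∧ l = i + 2) (hld : l < d) :
    ∃ a, σ j a ≠ a ∧ swap x (σ i x) * σ i = swap a (σ j a) * σ j := by
  have hE := h.isMaxElementary_evenGroup hcard
  have hiJ : i ∉ parityClass d 0 := by
    rw [mem_parityClass]
    omega
  have hjE : σ j ∈ evenGroup σ d := mem_evenGroup hjd (by omega)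
  obtain ⟨S, -, hSl⟩ := h.exists_mapsTo_fixer_eq_evenResidue hcard hd6 (i := l) (by omega) hld
  obtain ⟨z, hz, hzS⟩ := h.inter_nonempty_of_fixer_le hcard
    (fun g hg => mapsTo_orbit_union_orbit hg) hx.fixer_eq.le hSl.le (by omega) hid hld (by omega)
  have hjl : σ j ∈ fixer (evenGroup σ d) S :=
    hSl ▸ mem_evenResidue hjd (by omega) (by omega) (by omega)
  refine hx.exists_swap_mul_eq hE (h.mul_self i hid) hjE ?_ hz ((mem_fixer.1 hjl).2 z hzS)
    fun g hg hg' => h.eq_one_of_mem_closure_pair parityClass_subset_range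
      nonadjacent_parityClass (by omega) hid hiJ hg hg' hjd
  refine h.notMem_gen_of_notMem (awayFrom_subset.trans parityClass_subset_range) hjd ?_
  rw [mem_awayFrom_parityClass]
  omega

theorem swap_mul_mem_evenResidue (hi2 : i % 2 = 1) (hid : i + 1 < d) (hl2 : l % 2 = 1)
    (hld : l < d) : swap x (σ i x) * σ i ∈ evenResidue σ d l := by
  obtain rfl | hli := eq_or_ne l i
  · exact hx.swap_mul_mem
  obtain ⟨j, l', hjd, hld', hj, hjl⟩ : ∃ j l', j < d ∧ l' < d ∧
      (j = i + 1 ∧ l' + 2 = i ∨ j + 1 = i ∧ l' = i + 2) ∧ j ≠ l + 1 ∧ j + 1 ≠ l := by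
    rcases lt_or_gt_of_ne hli with hlt | hgt
    · exact ⟨i + 1, i - 2, by omega⟩
    · exact ⟨i - 1, i + 2, by omega⟩
  obtain ⟨a, -, ha⟩ := h.exists_swap_mul_eq hcard hd6 hx hi2 (by omega) hjd hj hld'
  obtain ⟨S, -, hSl⟩ := h.exists_mapsTo_fixer_eq_evenResidue hcard hd6 hl2 hld
  have hjl : σ j ∈ fixer (evenGroup σ d) S := hSl ▸ mem_evenResidue hjd (by omega) hjl.1 hjl.2
  rw [← hSl]
  refine mem_fixer.2 ⟨gen_awayFrom_le_gen hx.swap_mul_mem, fun z hz => ?_⟩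
  rw [ha]
  exact swap_apply_mul_apply_of_fixed ((mem_fixer.1 hjl).2 z hz)

theorem swap_mul_eq_one (hi2 : i % 2 = 1) (hid : i + 1 < d) :
    swap x (σ i x) * σ i = 1 := by
  refine h.eq_one_of_forall_mem parityClass_subset_range nonadjacent_parityClass
    (gen_awayFrom_le_gen hx.swap_mul_mem) fun c hc => ?_
  have hc := mem_parityClass.1 hc
  obtain ⟨l, hld, hl2, hlc⟩ : ∃ l < d, l % 2 = 1 ∧ (c = l + 1 ∨ c + 1 = l) := by
    rcases Nat.eq_zero_or_pos c with rfl | hc0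
    · exact ⟨1, by omega⟩
    · exact ⟨c - 1, by omega⟩
  refine gen_mono (Finset.erase_subset_erase c parityClass_subset_range)
    (evenResidue_le_gen_erase hlc ?_)
  exact h.swap_mul_mem_evenResidue hcard hd6 hx hi2 hid hl2 hld

end IsTwoTwoBreak

theorem isSwap_of_odd (hi2 : i % 2 = 1) (hid : i < d) : (σ i).IsSwap := by
  obtain rfl | hid' : i = d - 1 ∨ i + 1 < d := by omega
  · have hd : d % 2 = 0 := by omega
    obtain ⟨o, y, hb⟩ := h.exists_last_isOneTwoBreak hcard hd hd6
    exact ⟨o, _, hb.apply_ne.symm, h.last_eq_swap hcard hd hd6 hb⟩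
  · obtain ⟨x, hx⟩ := h.exists_isTwoTwoBreak hcard hd6 hi2 hid'
    have hone := h.swap_mul_eq_one hcard hd6 hx hi2 hid'
    refine ⟨x, σ i x, fun hxx => hx.breaks.1 (hxx ▸ mem_orbit_self x), ?_⟩
    exact eq_swap_of_swap_mul_eq_one hone

theorem isSwap_of_even (hj2 : j % 2 = 0) (hjd : j < d) : (σ j).IsSwap := by
  obtain ⟨i, l, hi2, hid, hld, hj⟩ : ∃ i l, i % 2 = 1 ∧ i + 1 < d ∧ l < d ∧
      (j = i + 1 ∧ l + 2 = i ∨ j + 1 = i ∧ l = i + 2) := by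
    rcases lt_or_ge j 3 with hj3 | hj3
    · exact ⟨j + 1, j + 3, by omega⟩
    · exact ⟨j - 1, j - 3, by omega⟩
  obtain ⟨x, hx⟩ := h.exists_isTwoTwoBreak hcard hd6 hi2 hid
  obtain ⟨a, hja, ha⟩ := h.exists_swap_mul_eq hcard hd6 hx hi2 (by omega) hjd hj hld
  have hone := ha.symm.trans (h.swap_mul_eq_one hcard hd6 hx hi2 hid)
  exact ⟨a, σ j a, hja.symm, eq_swap_of_swap_mul_eq_one hone⟩

theorem isSwap (hid : i < d) : (σ i).IsSwap :=
  (Nat.mod_two_eq_zero_or_one i).elim (fun hi2 => h.isSwap_of_even hcard hd6 hi2 hid)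
    fun hi2 => h.isSwap_of_odd hcard hd6 hi2 hid

end IsIndepString

end Transpositions

section Paths

namespace IsIndepString

theorem ne {G : Type*} [Group G] {σ : ℕ → G} {d i j : ℕ} (h : IsIndepString d σ) (hi : i < d)
    (hj : j < d) (hij : i ≠ j) : σ i ≠ σ j := fun heq =>
  h.notMem_gen i hi (heq ▸ mem_gen (Finset.mem_erase.2 ⟨hij.symm, Finset.mem_range.2 hj⟩))

variable {Ω : Type*} [DecidableEq Ω] {σ : ℕ → Perm Ω} {d i j n : ℕ} {z : Ω}
  (h : IsIndepString d σ) (hswap : ∀ i < d, (σ i).IsSwap)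
include h hswap

theorem eq_swap_of_apply_ne (hi : i < d) (hz : σ i z ≠ z) : σ i = swap z (σ i z) :=
  (hswap i hi).isCycle.eq_swap_of_apply_apply_eq_self hz (Equiv.ext_iff.1 (h.mul_self i hi) z)

theorem apply_eq_of_apply_ne (hj : j < d) (hij : i + 2 ≤ j) (hz : σ i z ≠ z) : σ j z = z := by
  by_contra hz'
  have hi : i < d := by omega
  have hσi := h.eq_swap_of_apply_ne hswap hi hz
  have hσj := h.eq_swap_of_apply_ne hswap hj hz'
  have hne : σ i z ≠ σ j z := fun heq => h.ne hi hj (by omega) (by rw [hσi, hσj, heq])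
  have hi' : σ i (σ j z) = σ j z := by
    rw [hσi]
    exact swap_apply_of_ne_of_ne hz' hne.symm
  have hj' : σ j (σ i z) = σ i z := by
    rw [hσj]
    exact swap_apply_of_ne_of_ne hz hne
  exact hne (hj'.symm.trans ((Equiv.ext_iff.1 (h.mul_comm i j hij hj) z).symm.trans hi'))

variable [Finite Ω] [IsPretransitive (gen σ (Finset.range d)) Ω]

theorem exists_apply_ne_apply_ne (hi : i + 1 < d) : ∃ z, σ i z ≠ z ∧ σ (i + 1) z ≠ z := by
  by_contra! hdisj
  obtain ⟨a, b, hab, hσi⟩ := hswap i (by omega)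
  obtain ⟨a', b', hab', hσi'⟩ := hswap (i + 1) hi
  have ha : σ i a ≠ a := by
    rw [hσi, swap_apply_left]
    exact hab.symm
  have ha' : σ (i + 1) a' ≠ a' := by
    rw [hσi', swap_apply_left]
    exact hab'.symm
  obtain ⟨⟨g, hg⟩, rfl⟩ := exists_smul_eq (gen σ (Finset.range d)) a a'
  have hS : ∀ k < d, Set.MapsTo (σ k) {z | ∃ j ≤ i, σ j z ≠ z} {z | ∃ j ≤ i, σ j z ≠ z} := by
    rintro k hk z ⟨j, hj, hz⟩
    by_cases hkz : σ k z = z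
    · rw [hkz]
      exact ⟨j, hj, hz⟩
    rcases le_or_gt k i with hki | hki
    · exact ⟨k, hki, fun heq => hkz ((σ k).injective heq)⟩
    · obtain hjk | ⟨rfl, rfl⟩ : j + 2 ≤ k ∨ j = i ∧ k = i + 1 := by omega
      · exact absurd (h.apply_eq_of_apply_ne hswap hk hjk hz) hkz
      · exact absurd (hdisj z hz) hkz
  obtain ⟨j, hj, hz⟩ := mapsTo_of_mem_closure
    (Set.forall_mem_image.2 fun k hk => hS k (Finset.mem_range.1 hk)) hg ⟨i, le_rfl, ha⟩
  obtain rfl | hji := hj.eq_or_lt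
  · exact ha' (hdisj _ hz)
  · exact ha' (h.apply_eq_of_apply_ne hswap hi (by omega) hz)

theorem exists_path_succ {p : ℕ → Ω} (hn : 2 ≤ n) (hnd : n < d) (hp : Set.InjOn p (Set.Iic n))
    (hσ : ∀ i < n, σ i = swap (p i) (p (i + 1))) :
    ∃ q ∉ p '' Set.Iic n, σ n = swap (p n) q := by
  have hmoves : ∀ i < n, σ i (p i) ≠ p i ∧ σ i (p (i + 1)) ≠ p (i + 1) := by
    intro i hi
    have hne : p i ≠ p (i + 1) := fun heq => by
      have := hp (Set.mem_Iic.2 hi.le) (Set.mem_Iic.2 hi) heq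
      omega
    rw [hσ i hi, swap_apply_left, swap_apply_right]
    exact ⟨hne.symm, hne⟩
  have hfix : ∀ i < n, σ n (p i) = p i := by
    intro i hi
    rcases Nat.eq_zero_or_pos i with rfl | hi0
    · exact h.apply_eq_of_apply_ne hswap hnd (by omega) (hmoves 0 hi).1
    · refine h.apply_eq_of_apply_ne hswap (i := i - 1) hnd (by omega) ?_
      simpa only [Nat.sub_add_cancel hi0] using (hmoves (i - 1) (by omega)).2
  have hpn : σ n (p n) ≠ p n := by
    obtain ⟨z, hz, hz'⟩ := h.exists_apply_ne_apply_ne hswap (i := n - 1) (by omega)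
    rw [Nat.sub_add_cancel (by omega)] at hz'
    rw [hσ (n - 1) (by omega), Nat.sub_add_cancel (by omega)] at hz
    obtain ⟨-, rfl | rfl⟩ := swap_apply_ne_self_iff.1 hz
    · exact absurd (hfix (n - 1) (by omega)) hz'
    · exact hz'
  refine ⟨σ n (p n), ?_, h.eq_swap_of_apply_ne hswap hnd hpn⟩
  rintro ⟨i, hi, heq⟩
  obtain rfl | hin := (Set.mem_Iic.1 hi).eq_or_lt
  · exact hpn heq.symm
  · have hpp := (σ n).injective ((hfix i hin).trans heq)
    exact hin.ne (hp hi Set.self_mem_Iic hpp)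

theorem exists_injOn_eq_swap (hn : 2 ≤ n) (hnd : n ≤ d) :
    ∃ p : ℕ → Ω, Set.InjOn p (Set.Iic n) ∧ ∀ i < n, σ i = swap (p i) (p (i + 1)) := by
  induction n, hn using Nat.le_induction with
  | base =>
    obtain ⟨z, hz₀, hz₁⟩ := h.exists_apply_ne_apply_ne hswap (i := 0) (by omega)
    have hσ₀ := h.eq_swap_of_apply_ne hswap (by omega) hz₀
    have hσ₁ := h.eq_swap_of_apply_ne hswap (by omega) hz₁
    have hne : σ 0 z ≠ σ 1 z := fun heq =>
      h.ne (i := 0) (j := 1) (by omega) (by omega) (by decide) (by rw [hσ₀, hσ₁, heq])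
    refine ⟨fun i => if i = 0 then σ 0 z else if i = 1 then z else σ 1 z, ?_, fun i hi => ?_⟩
    · intro i hi j hj
      simp only [Set.mem_Iic] at hi hj
      interval_cases i <;> interval_cases j <;> simp [hz₀, hz₁, hne, hz₀.symm, hz₁.symm, hne.symm]
    · interval_cases i
      · rw [hσ₀, swap_comm]
        simp
      · rw [hσ₁]
        simp
  | succ n hn ih =>
    obtain ⟨p, hp, hσ⟩ := ih (by omega)
    obtain ⟨q, hq, hσn⟩ := h.exists_path_succ hswap hn (by omega) hp hσ
    have hupdate : Set.EqOn (Function.update p (n + 1) q) p (Set.Iic n) := fun i hi =>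
      Function.update_of_ne (Nat.lt_succ_of_le hi).ne _ _
    refine ⟨Function.update p (n + 1) q, ?_, fun i hi => ?_⟩
    · rw [show Set.Iic (n + 1) = insert (n + 1) (Set.Iic n) from Order.Iic_succ n,
        Set.injOn_insert (by simp), Function.update_self, hupdate.image_eq]
      exact ⟨hp.congr hupdate.symm, hq⟩
    · obtain rfl | hin : i = n ∨ i < n := by omega
      · rw [hupdate Set.self_mem_Iic, Function.update_self, hσn]
      · rw [hupdate (Set.mem_Iic.2 hin.le), hupdate (Set.mem_Iic.2 hin), hσ i hin]

theorem exists_equiv_eq_swap (hcard : Nat.card Ω = d + 1) (hd2 : 2 ≤ d) :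
    ∃ c : Fin (d + 1) ≃ Ω, ∀ i : Fin d, σ i = swap (c i.castSucc) (c i.succ) := by
  obtain ⟨p, hp, hσ⟩ := h.exists_injOn_eq_swap hswap hd2 le_rfl
  have hinj : Function.Injective fun i : Fin (d + 1) => p i := fun i j hij =>
    Fin.ext (hp (Nat.lt_succ_iff.1 i.2) (Nat.lt_succ_iff.1 j.2) hij)
  have hbij := hinj.bijective_of_nat_card_le (by rw [hcard, Nat.card_fin])
  exact ⟨.ofBijective _ hbij, fun i => hσ i i.2⟩

end IsIndepString

end Paths

section FinFamilies

variable {G : Type*} [Group G] {d : ℕ} {f : Fin d → G}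

theorem extend_val_image (S : Set (Fin d)) :
    Function.extend Fin.val f 1 '' (Fin.val '' S) = f '' S := by
  rw [Set.image_image]
  exact Set.image_congr fun i _ => Fin.val_injective.extend_apply f 1 i

theorem gen_extend_val_range :
    gen (Function.extend Fin.val f 1) (Finset.range d) = Subgroup.closure (Set.range f) := by
  rw [gen, Finset.coe_range, ← Fin.range_val, ← Set.image_univ, extend_val_image, Set.image_univ]

theorem gen_extend_val_erase (i : Fin d) :
    gen (Function.extend Fin.val f 1) ((Finset.range d).erase i) =
      Subgroup.closure (f '' {i}ᶜ) := by
  rw [gen, Finset.coe_erase, Finset.coe_range, ← Fin.range_val, ← Set.image_univ,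
    ← Set.image_singleton, ← Set.image_sdiff Fin.val_injective, extend_val_image,
    Set.compl_eq_univ_sdiff]

theorem isIndepString_extend_val (hsq : ∀ i, f i * f i = 1)
    (hcomm : ∀ i j : Fin d, (i : ℕ) + 2 ≤ j → f i * f j = f j * f i)
    (hind : ∀ i, f i ∉ Subgroup.closure (f '' {i}ᶜ)) :
    IsIndepString d (Function.extend Fin.val f 1) := by
  have hval (i : Fin d) : Function.extend Fin.val f 1 i = f i :=
    Fin.val_injective.extend_apply f 1 i
  refine ⟨fun i hi => ?_, fun i j hij hj => ?_, fun i hi => ?_⟩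
  · rw [hval ⟨i, hi⟩, hsq]
  · rw [hval ⟨i, by omega⟩, hval ⟨j, hj⟩, hcomm _ _ hij]
  · rw [hval ⟨i, hi⟩, gen_extend_val_erase ⟨i, hi⟩]
    exact hind _

theorem exists_equiv_eq_swap_of_isPretransitive {α : Type*} [Finite α] [DecidableEq α]
    {f : Fin d → Perm α} (hd6 : 6 ≤ d) (hcard : Nat.card α ≤ d + 1)
    (hsq : ∀ i, f i * f i = 1)
    (hcomm : ∀ i j : Fin d, (i : ℕ) + 2 ≤ j → f i * f j = f j * f i)
    (hind : ∀ i, f i ∉ Subgroup.closure (f '' {i}ᶜ))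
    [IsPretransitive (Subgroup.closure (Set.range f)) α] :
    Nat.card α = d + 1 ∧ Subgroup.closure (Set.range f) = ⊤ ∧
      ∃ c : Fin (d + 1) ≃ α, ∀ i : Fin d, f i = swap (c i.castSucc) (c i.succ) := by
  have h := isIndepString_extend_val hsq hcomm hind
  have hne : Nonempty α := by
    by_contra hempty
    rw [not_nonempty_iff] at hempty
    exact hind ⟨0, by omega⟩ (Subsingleton.elim 1 (f _) ▸ one_mem _)
  have htrans : IsPretransitive (gen (Function.extend Fin.val f 1) (Finset.range d)) α := by
    rwa [gen_extend_val_range]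
  have hcard : Nat.card α = d + 1 := le_antisymm hcard h.lt_card
  have hval (i : Fin d) : Function.extend Fin.val f 1 i = f i :=
    Fin.val_injective.extend_apply f 1 i
  have hswap : ∀ i < d, (Function.extend Fin.val f 1 i).IsSwap := fun i hi =>
    h.isSwap hcard hd6 hi
  obtain ⟨c, hc⟩ := h.exists_equiv_eq_swap hswap hcard (by omega)
  refine ⟨hcard, closure_of_isSwap_of_isPretransitive ?_, c, fun i => (hval i).symm.trans (hc i)⟩
  exact Set.forall_mem_range.2 fun i => hval i ▸ hswap i i.2

end FinFamilies

section Semiconj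

variable {Ω α ι : Type*} {b : Ω → α} {ρ : ι → Perm Ω} {π : ι → Perm α}

theorem eq_of_semiconj (hb : b.Surjective) {g : Perm Ω} {k k' : Perm α}
    (hk : b.Semiconj g k) (hk' : b.Semiconj g k') : k = k' :=
  DFunLike.coe_injective (hb.injective_comp_right (hk.comp_eq.symm.trans hk'.comp_eq))

theorem exists_mem_closure_range_semiconj (hπ : ∀ i, b.Semiconj (ρ i) (π i)) {g : Perm Ω}
    (hg : g ∈ Subgroup.closure (Set.range ρ)) :
    ∃ k ∈ Subgroup.closure (Set.range π), b.Semiconj g k := by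
  induction hg using Subgroup.closure_induction with
  | mem g hg =>
    obtain ⟨i, rfl⟩ := hg
    exact ⟨π i, Subgroup.subset_closure ⟨i, rfl⟩, hπ i⟩
  | one => exact ⟨1, one_mem _, fun _ => rfl⟩
  | mul g g' _ _ ih ih' =>
    obtain ⟨k, hk, hgk⟩ := ih
    obtain ⟨k', hk', hgk'⟩ := ih'
    exact ⟨k * k', mul_mem hk hk', hgk.comp_right hgk'⟩
  | inv g _ ih =>
    obtain ⟨k, hk, hgk⟩ := ih
    exact ⟨k⁻¹, inv_mem hk, hgk.inverses_right g.right_inv k.left_inv⟩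

theorem isPretransitive_of_semiconj (hb : b.Surjective) (hπ : ∀ i, b.Semiconj (ρ i) (π i))
    [IsPretransitive (Subgroup.closure (Set.range ρ)) Ω] :
    IsPretransitive (Subgroup.closure (Set.range π)) α := by
  refine ⟨hb.forall₂.2 fun x y => ?_⟩
  obtain ⟨⟨g, hg⟩, rfl⟩ := exists_smul_eq (Subgroup.closure (Set.range ρ)) x y
  obtain ⟨k, hk, hgk⟩ := exists_mem_closure_range_semiconj hπ hg
  exact ⟨⟨k, hk⟩, (hgk x).symm⟩

end Semiconj

namespace IsSggi

variable {n r : ℕ} {ρ : Fin r → Perm (Fin n)} (h : IsSggi ρ)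
include h

theorem mul_self (i : Fin r) : ρ i * ρ i = 1 := by
  rw [← pow_two, ← h.1 i, pow_orderOf_eq_one]

theorem mul_comm {i j : Fin r} (hij : (i : ℕ) + 2 ≤ j) : ρ i * ρ j = ρ j * ρ i := by
  have hsq := h.2 i j (by rw [lt_abs]; omega)
  rw [pow_two] at hsq
  rw [← inv_eq_of_mul_eq_one_right hsq, mul_inv_rev, inv_eq_of_mul_eq_one_right (h.mul_self i),
    inv_eq_of_mul_eq_one_right (h.mul_self j)]

variable {α : Type*} {b : Fin n → α} {π : Fin r → Perm α} (hb : b.Surjective)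
  (hπ : ∀ i, b.Semiconj (ρ i) (π i))
include hb hπ

theorem mul_self_of_semiconj (i : Fin r) : π i * π i = 1 := by
  refine eq_of_semiconj hb (g := ρ i * ρ i) ((hπ i).comp_right (hπ i)) ?_
  rw [h.mul_self]
  exact fun _ => rfl

theorem mul_comm_of_semiconj {i j : Fin r} (hij : (i : ℕ) + 2 ≤ j) : π i * π j = π j * π i := by
  refine eq_of_semiconj hb (g := ρ i * ρ j) ((hπ i).comp_right (hπ j)) ?_
  rw [h.mul_comm hij]
  exact (hπ j).comp_right (hπ i)

end IsSggi

theorem stmt15_general {α : Type*} [Finite α] [DecidableEq α] {m r : ℕ}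
    (hm : Nat.card α = m) (hr7 : 7 ≤ r) (hmr : m ≤ r) (π : Fin r → Perm α)
    (hsq : ∀ i, π i * π i = 1)
    (hcomm : ∀ i j : Fin r, (i : ℕ) + 2 ≤ j → π i * π j = π j * π i)
    (htrans : IsPretransitive (Subgroup.closure (Set.range π)) α)
    (hgen : Subgroup.closure (π '' {i | (i : ℕ) ≠ 0}) = Subgroup.closure (Set.range π))
    (hind : ∀ l ∈ {i : Fin r | (i : ℕ) ≠ 0},
      π l ∉ Subgroup.closure (π '' ({i | (i : ℕ) ≠ 0} \ {l}))) :
    r = m ∧ Subgroup.closure (Set.range π) = ⊤ ∧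
    ∃ c : Fin m ≃ α, ∀ j : ℕ, 1 ≤ j → j ≤ r - 1 → ∀ (h1 : j - 1 < m) (h2 : j < m),
      π ⟨j, by omega⟩ = swap (c ⟨j - 1, h1⟩) (c ⟨j, h2⟩) := by
  obtain ⟨d, rfl⟩ : ∃ d, r = d + 1 := ⟨r - 1, by omega⟩
  have hL : {i : Fin (d + 1) | (i : ℕ) ≠ 0} = Set.range Fin.succ := by
    rw [Fin.range_succ]
    exact Set.ext fun i => Fin.val_ne_zero_iff
  rw [hL, ← Set.range_comp] at hgen
  rw [← hgen] at htrans ⊢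
  obtain ⟨hcard, htop, c, hc⟩ := exists_equiv_eq_swap_of_isPretransitive
    (f := π ∘ Fin.succ) (by omega) (hm.trans_le hmr) (fun i => hsq _)
    (fun i j hij => hcomm i.succ j.succ (by simpa using hij)) fun i => by
      have := hind i.succ (by simp)
      rwa [hL, ← Set.image_univ, ← Set.image_singleton,
        ← Set.image_sdiff (Fin.succ_injective d), ← Set.compl_eq_univ_sdiff, ← Set.image_comp]
        at this
  obtain rfl : m = d + 1 := hm.symm.trans hcard
  refine ⟨rfl, htop, c, fun j hj1 hjd _ _ => ?_⟩
  obtain ⟨k, rfl⟩ : ∃ k, j = k + 1 := ⟨j - 1, by omega⟩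
  exact hc ⟨k, by omega⟩

theorem stmt15 {n r m : ℕ} (hm7 : 7 ≤ m) (hn : n = 2 * m) (hr : n / 2 ≤ r)
    (ρ : Fin r → Equiv.Perm (Fin n)) (hstring : IsStringC ρ)
    (htrans : MulAction.IsPretransitive ↥(Subgroup.closure (Set.range ρ)) (Fin n))
    (b : Fin n → Fin m) (hbsurj : Function.Surjective b)
    (hfib : ∀ c : Fin m, Set.ncard {x | b x = c} = 2)
    (hcompat : ∀ g ∈ Subgroup.closure (Set.range ρ), ∀ x y : Fin n,
      b x = b y → b (g x) = b (g y))
    -- every fiber of b is a maximal block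
    (hmax : ∀ (c : Fin m) (X : Set (Fin n)),
      MulAction.IsBlock ↥(Subgroup.closure (Set.range ρ)) X →
      {x | b x = c} ⊆ X → X = {x | b x = c} ∨ X = Set.univ)
    -- π l is the induced block permutation φ (ρ l)
    (π : Fin r → Equiv.Perm (Fin m))
    (hπ : ∀ (l : Fin r) (x : Fin n), b (ρ l x) = π l (b x))
    -- L generates the image of φ independently
    (L : Set (Fin r))
    (hLgen : Subgroup.closure (π '' L) = Subgroup.closure (Set.range π))
    (hLind : ∀ l ∈ L, π l ∉ Subgroup.closure (π '' (L \ {l})))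
    -- R ∪ C = {0}, i.e. L = Fin r \ {0}
    (hL : L = {i : Fin r | (i : ℕ) ≠ 0}) :
    r = n / 2 ∧
    Subgroup.closure (Set.range π) = ⊤ ∧
    ∃ c : Fin m ≃ Fin m, ∀ j : ℕ, 1 ≤ j → j ≤ r - 1 →
      ∀ (h1 : j - 1 < m) (h2 : j < m),
        π ⟨j, by omega⟩ = Equiv.swap (c ⟨j - 1, h1⟩) (c ⟨j, h2⟩) := by
  subst hn hL
  rw [Nat.mul_div_cancel_left m two_pos] at hr ⊢
  exact stmt15_general (Nat.card_fin m) (hm7.trans hr) hr π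
    (hstring.1.mul_self_of_semiconj hbsurj hπ)
    (fun _ _ => hstring.1.mul_comm_of_semiconj hbsurj hπ)
    (isPretransitive_of_semiconj hbsurj hπ) hLgen hLind
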